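/- arXiv:1709.09924 — 5 statements merged into one kernel-verified Lean document; each statement's English description precedes it below -/
import Mathlib

section
/- Let L > 0. There exist λ ∈ ℂ and three times continuously differentiable functions θ, u : [0,L] → ℂ, not both identically zero, satisfying −u′(x) − u‴(x) = λ·θ(x) and −θ′(x) − θ‴(x) = λ·u(x) for all x ∈ [0,L], with boundary conditions θ(0) = θ(L) = θ′(0) = θ″(L) = 0 and u(0) = u(L) = u′(L) = 0, together with the additional condition u″(0) = 0, if and only if L ∈ ℛ. -/
open Set

/-- The set 𝒩 = { (2π/√3)·√(k² + k·l + l²) : k, l positive integers }. -/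
def criticalN : Set ℝ :=
  {x | ∃ k l : ℕ, 0 < k ∧ 0 < l ∧
    x = (2 * Real.pi / Real.sqrt 3) * Real.sqrt ((k : ℝ)^2 + (k : ℝ) * (l : ℝ) + (l : ℝ)^2)}

/-- The set ℛ = { π·√((1/2+2k)² + (1/2+2l)² + (1/2+2k)(1/2+2l)) : k, l ∈ ℤ, k ≠ l }. -/
def criticalR : Set ℝ :=
  {x | ∃ k l : ℤ, k ≠ l ∧
    x = Real.pi * Real.sqrt ((1/2 + 2*(k : ℝ))^2 + (1/2 + 2*(l : ℝ))^2
      + (1/2 + 2*(k : ℝ)) * (1/2 + 2*(l : ℝ)))}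

/-- The set 𝒩₃ = { (2π/√3)·√(k² + k·l + l²) : k, l positive integers, 3 ∣ 2k + l }. -/
def criticalN3 : Set ℝ :=
  {x | ∃ k l : ℕ, 0 < k ∧ 0 < l ∧ 3 ∣ 2 * k + l ∧
    x = (2 * Real.pi / Real.sqrt 3) * Real.sqrt ((k : ℝ)^2 + (k : ℝ) * (l : ℝ) + (l : ℝ)^2)}

/-!
The sum `θ + u` solves `y''' + y' + λ y = 0`, and so does the reflection `x ↦ (θ - u) (L - x)` of
the difference. The boundary conditions exchange the end values of the two: if `V` and `Z` are the
states `(y, y', y'')` of these solutions, then `Z 0 = -V L` and `Z L = V 0`. Hence, if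
`ε ^ 2 = -1`, the solution with state `Y = V + ε Z` satisfies `Y L = ε Y 0`, and the first entry of
`Y 0` vanishes.
Each root `m` of `m ^ 3 + m + λ` gives a left eigenvector of the companion operator, so
`exp (m L) = ε` unless that eigenvector annihilates `Y 0 ≠ 0`, which it does for at most one root.
Two distinct roots `p`, `q` satisfy `p ^ 2 + p q + q ^ 2 + 1 = 0`, and with `p L` and `q L` in
`± i π (1 / 2 + 2 ℤ)` this says that `L ∈ ℛ`.
Conversely, two such roots for `ε = i` give the eigenmode `θ = cosh (p x) - cosh (q x)`,
`u = sinh (p x) - sinh (q x)`.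
-/

section LinearODE

variable {E : Type*} [NormedAddCommGroup E] [NormedSpace ℂ E] {A B : E →L[ℂ] E} {L : ℝ}
  {Y Z : ℝ → E}

/-- `Y` solves the autonomous linear equation `Y' = A Y` on `[0, L]`. The derivative at an end
point is two-sided, as in the theorem. -/
def SolvesLinearODE (A : E →L[ℂ] E) (L : ℝ) (Y : ℝ → E) : Prop :=
  ∀ x ∈ Icc 0 L, HasDerivAt Y (A (Y x)) x

lemma SolvesLinearODE.add_const_smul (hY : SolvesLinearODE A L Y) (hZ : SolvesLinearODE A L Z)
    (c : ℂ) : SolvesLinearODE A L (fun x ↦ Y x + c • Z x) := fun x hx ↦ by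
  rw [map_add, map_smul]
  exact (hY x hx).add ((hZ x hx).const_smul c)

lemma SolvesLinearODE.comp_const_sub (hY : SolvesLinearODE B L Y) {J : E →L[ℂ] E}
    (hJ : ∀ v, A (J v) = -J (B v)) : SolvesLinearODE A L (fun x ↦ J (Y (L - x))) := by
  intro x hx
  have hx' : L - x ∈ Icc 0 L := ⟨by linarith [hx.2], by linarith [hx.1]⟩
  have hJY := ((J.restrictScalars ℝ).hasFDerivAt.comp_hasDerivAt _ (hY _ hx')).comp_const_sub L x
  rw [hJ]
  exact hJY

lemma SolvesLinearODE.eq_zero (hY : SolvesLinearODE A L Y) (h0 : Y 0 = 0) :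
    ∀ x ∈ Icc 0 L, Y x = 0 :=
  eq_zero_of_abs_deriv_le_mul_abs_self_of_eq_zero_right
    (fun x hx ↦ (hY x hx).continuousAt.continuousWithinAt)
    (fun x hx ↦ (hY x (Ico_subset_Icc_self hx)).hasDerivWithinAt) h0
    (fun x _ ↦ A.le_opNorm (Y x))

lemma eq_exp_mul_of_hasDerivAt {f : ℝ → ℂ} {m : ℂ}
    (hf : ∀ x ∈ Icc 0 L, HasDerivAt f (m * f x) x) :
    ∀ x ∈ Icc 0 L, f x = Complex.exp (m * x) * f 0 := by
  have hlin (x : ℝ) : HasDerivAt (fun x : ℝ ↦ -m * (x : ℂ)) (-m * 1) x :=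
    Complex.ofRealCLM.hasDerivAt.const_mul (-m)
  have hconst : ∀ x ∈ Icc 0 L, HasDerivAt (fun x : ℝ ↦ Complex.exp (-m * x) * f x) 0 x :=
    fun x hx ↦ ((hlin x).cexp.mul (hf x hx)).congr_deriv (by ring)
  intro x hx
  have hx0 : Complex.exp (-m * x) * f x = f 0 := by
    simpa using constant_of_has_deriv_right_zero
      (fun y hy ↦ (hconst y hy).continuousAt.continuousWithinAt)
      (fun y hy ↦ (hconst y (Ico_subset_Icc_self hy)).hasDerivWithinAt) x hx
  rw [← hx0, ← mul_assoc, ← Complex.exp_add]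
  simp

lemma SolvesLinearODE.hasDerivAt_apply (hY : SolvesLinearODE A L Y) (ℓ : E →L[ℂ] ℂ) :
    ∀ x ∈ Icc 0 L, HasDerivAt (fun x ↦ ℓ (Y x)) (ℓ (A (Y x))) x := fun x hx ↦
  (ℓ.restrictScalars ℝ).hasFDerivAt.comp_hasDerivAt x (hY x hx)

lemma SolvesLinearODE.apply_eq_exp_mul (hY : SolvesLinearODE A L Y) {ℓ : E →L[ℂ] ℂ} {m : ℂ}
    (hℓ : ∀ v, ℓ (A v) = m * ℓ v) :
    ∀ x ∈ Icc 0 L, ℓ (Y x) = Complex.exp (m * x) * ℓ (Y 0) :=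
  eq_exp_mul_of_hasDerivAt fun x hx ↦ hℓ (Y x) ▸ hY.hasDerivAt_apply ℓ x hx

lemma SolvesLinearODE.apply_eq_exp_mul_of_jordan (hY : SolvesLinearODE A L Y)
    {ℓ ℓ' : E →L[ℂ] ℂ} {m : ℂ} (hℓ : ∀ v, ℓ (A v) = m * ℓ v)
    (hℓ' : ∀ v, ℓ' (A v) = m * ℓ' v + ℓ v) :
    ∀ x ∈ Icc 0 L, ℓ' (Y x) = Complex.exp (m * x) * (ℓ' (Y 0) + x * ℓ (Y 0)) := by
  have hderiv : ∀ x ∈ Icc 0 L, HasDerivAt (fun x : ℝ ↦ ℓ' (Y x) - x * ℓ (Y x))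
      (m * (ℓ' (Y x) - x * ℓ (Y x))) x := fun x hx ↦
    ((hY.hasDerivAt_apply ℓ' x hx).sub ((Complex.ofRealCLM.hasDerivAt (x := x)).mul
      (hY.hasDerivAt_apply ℓ x hx))).congr_deriv <| by
        simp only [Complex.ofRealCLM_apply, Complex.ofReal_one, hℓ, hℓ']
        ring
  intro x hx
  have hx' := eq_exp_mul_of_hasDerivAt hderiv x hx
  rw [Complex.ofReal_zero] at hx'
  linear_combination hx' + x * hY.apply_eq_exp_mul hℓ x hx

end LinearODE

lemma eq_zero_of_hasDerivAt_of_eqOn_Icc {F : Type*} [NormedAddCommGroup F] [NormedSpace ℝ F]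
    {f : ℝ → F} {f' : F} {a b : ℝ} (hab : a < b) (hf : HasDerivAt f f' a)
    (h0 : ∀ x ∈ Icc a b, f x = 0) : f' = 0 :=
  have ha : a ∈ Icc a b := left_mem_Icc.2 hab.le
  (uniqueDiffOn_Icc hab a ha).eq_deriv _ hf.hasDerivWithinAt
    ((hasDerivWithinAt_const a _ 0).congr h0 (h0 a ha))

lemma card_roots_toFinset_of_simple {K : Type*} [Field K] [IsAlgClosed K] [DecidableEq K]
    {P : Polynomial K} (hP : ∀ m, P.IsRoot m → ¬ P.derivative.IsRoot m) :
    P.roots.toFinset.card = P.natDegree := by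
  have hsep : P.Separable := (Polynomial.isCoprime_iff_aeval_ne_zero_of_isAlgClosed K _ _ _).2
    fun m ↦ by
      simpa only [Polynomial.coe_aeval_eq_eval, ← not_and_or] using fun h ↦ hP m h.1 h.2
  rw [Multiset.toFinset_card_of_nodup (Polynomial.nodup_roots hsep),
    (IsAlgClosed.splits P).natDegree_eq_card_roots]

section ThirdOrder

open ContinuousLinearMap (fst snd)

/-- The companion operator of `y''' + y' + lam * y = 0`, acting on the state `(y, y', y'')`. -/
noncomputable def companion (lam : ℂ) : ℂ × ℂ × ℂ →L[ℂ] ℂ × ℂ × ℂ :=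
  (fst ℂ ℂ ℂ ∘L snd ℂ ℂ (ℂ × ℂ)).prod ((snd ℂ ℂ ℂ ∘L snd ℂ ℂ (ℂ × ℂ)).prod
    (-(fst ℂ ℂ ℂ ∘L snd ℂ ℂ (ℂ × ℂ)) - lam • fst ℂ ℂ (ℂ × ℂ)))

lemma companion_apply (lam : ℂ) (v : ℂ × ℂ × ℂ) :
    companion lam v = (v.2.1, v.2.2, -v.2.1 - lam * v.1) := rfl

/-- The map induced on states `(y, y', y'')` by a reflection `x ↦ L - x` of the variable. -/
noncomputable def stateReflection : ℂ × ℂ × ℂ →L[ℂ] ℂ × ℂ × ℂ :=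
  (fst ℂ ℂ (ℂ × ℂ)).prod
    ((-(fst ℂ ℂ ℂ ∘L snd ℂ ℂ (ℂ × ℂ))).prod (snd ℂ ℂ ℂ ∘L snd ℂ ℂ (ℂ × ℂ)))

lemma stateReflection_apply (v : ℂ × ℂ × ℂ) : stateReflection v = (v.1, -v.2.1, v.2.2) := rfl

lemma companion_stateReflection (lam : ℂ) (v : ℂ × ℂ × ℂ) :
    companion lam (stateReflection v) = -stateReflection (companion (-lam) v) := by
  simp only [companion_apply, stateReflection_apply, Prod.neg_mk, neg_neg]
  ring_nf

/-- The left eigenvector of `companion lam` for a root `m` of `m ^ 3 + m + lam`. -/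
noncomputable def charFunctional (m : ℂ) : ℂ × ℂ × ℂ →L[ℂ] ℂ :=
  (m ^ 2 + 1) • fst ℂ ℂ (ℂ × ℂ) + m • (fst ℂ ℂ ℂ ∘L snd ℂ ℂ (ℂ × ℂ))
    + snd ℂ ℂ ℂ ∘L snd ℂ ℂ (ℂ × ℂ)

lemma charFunctional_apply (m : ℂ) (v : ℂ × ℂ × ℂ) :
    charFunctional m v = (m ^ 2 + 1) * v.1 + m * v.2.1 + v.2.2 := rfl

/-- The derivative of `charFunctional m` in `m`; it completes `charFunctional m` to a Jordan chain
of `companion lam` when `m` is a multiple root of `m ^ 3 + m + lam`. -/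
noncomputable def charFunctionalDeriv (m : ℂ) : ℂ × ℂ × ℂ →L[ℂ] ℂ :=
  (2 * m) • fst ℂ ℂ (ℂ × ℂ) + fst ℂ ℂ ℂ ∘L snd ℂ ℂ (ℂ × ℂ)

lemma charFunctionalDeriv_apply (m : ℂ) (v : ℂ × ℂ × ℂ) :
    charFunctionalDeriv m v = 2 * m * v.1 + v.2.1 := rfl

variable {lam m : ℂ}

lemma charFunctional_companion (hm : m ^ 3 + m + lam = 0) (v : ℂ × ℂ × ℂ) :
    charFunctional m (companion lam v) = m * charFunctional m v := by
  simp only [charFunctional_apply, companion_apply]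
  linear_combination -v.1 * hm

lemma charFunctionalDeriv_companion (hm : 3 * m ^ 2 + 1 = 0) (v : ℂ × ℂ × ℂ) :
    charFunctionalDeriv m (companion lam v)
      = m * charFunctionalDeriv m v + charFunctional m v := by
  simp only [charFunctionalDeriv_apply, charFunctional_apply, companion_apply]
  linear_combination -v.1 * hm

lemma eq_of_charFunctional_eq_zero {n : ℂ} {v : ℂ × ℂ × ℂ} (hv : v ≠ 0) (hv1 : v.1 = 0)
    (hm : charFunctional m v = 0) (hn : charFunctional n v = 0) : m = n := by
  simp only [charFunctional_apply, hv1, mul_zero, zero_add] at hm hn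
  by_contra hmn
  have h21 : v.2.1 = 0 := mul_left_cancel₀ (sub_ne_zero.2 hmn) (by linear_combination hm - hn)
  have h22 : v.2.2 = 0 := by simpa [h21] using hm
  exact hv (Prod.ext hv1 (Prod.ext h21 h22))

lemma exists_finset_charRoots (hsimple : ∀ m : ℂ, m ^ 3 + m + lam = 0 → 3 * m ^ 2 + 1 ≠ 0) :
    ∃ s : Finset ℂ, s.card = 3 ∧ ∀ m ∈ s, m ^ 3 + m + lam = 0 := by
  let P : Polynomial ℂ := .X ^ 3 + .X + .C lam
  have hdeg : P.natDegree = 3 := by simp only [P]; compute_degree!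
  refine ⟨P.roots.toFinset, hdeg ▸ card_roots_toFinset_of_simple fun m hm hm' ↦
    hsimple m (by simpa [P] using hm) (by simpa [P, two_add_one_eq_three] using hm'), fun m hm ↦ ?_⟩
  simpa [P] using Polynomial.isRoot_of_mem_roots (Multiset.mem_toFinset.1 hm)

variable {ε : ℂ} {L : ℝ} {Y : ℝ → ℂ × ℂ × ℂ}

lemma exp_eq_of_charFunctional_ne_zero (hL : 0 ≤ L) (hY : SolvesLinearODE (companion lam) L Y)
    (hε : Y L = ε • Y 0) (hm : m ^ 3 + m + lam = 0) (hm0 : charFunctional m (Y 0) ≠ 0) :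
    Complex.exp (m * L) = ε := by
  have h := hY.apply_eq_exp_mul (charFunctional_companion hm) L (right_mem_Icc.2 hL)
  rw [hε, map_smul, smul_eq_mul] at h
  exact (mul_right_cancel₀ hm0 h).symm

-- At a double root `m` the term growing linearly in `x` must vanish, and then both `m` and the
-- third root `-2 * m` have exponential `ε`, so that `ε ^ 3 = 1`.
lemma three_mul_sq_add_one_ne_zero_of_quasiperiodic (hL : 0 < L)
    (hY : SolvesLinearODE (companion lam) L Y) (h0 : Y 0 ≠ 0) (h01 : (Y 0).1 = 0)
    (hε : Y L = ε • Y 0) (hε3 : ε ^ 3 ≠ 1) (hm : m ^ 3 + m + lam = 0) : 3 * m ^ 2 + 1 ≠ 0 := by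
  intro hdouble
  have hjordan := hY.apply_eq_exp_mul_of_jordan (charFunctional_companion hm)
    (charFunctionalDeriv_companion hdouble) L (right_mem_Icc.2 hL.le)
  rw [hε, map_smul, smul_eq_mul, charFunctionalDeriv_apply, h01, mul_zero, zero_add] at hjordan
  have hannihilates : charFunctional m (Y 0) = 0 := by
    by_contra hne
    have hexp := exp_eq_of_charFunctional_ne_zero hL.le hY hε hm hne
    have hLexp : (L : ℂ) * Complex.exp (m * L) ≠ 0 :=
      mul_ne_zero (by exact_mod_cast hL.ne') (Complex.exp_ne_zero _)
    exact hne (mul_left_cancel₀ hLexp (by linear_combination -hjordan - (Y 0).2.1 * hexp))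
  have hthird : charFunctional (-2 * m) (Y 0) ≠ 0 := fun h ↦ by
    have hm0 : m = 0 := by
      linear_combination (1 / 3) * eq_of_charFunctional_eq_zero h0 h01 hannihilates h
    simp [hm0] at hdouble
  have hexp_third : Complex.exp (-2 * m * L) = ε :=
    exp_eq_of_charFunctional_ne_zero hL.le hY hε
      (by linear_combination -3 * m * hdouble + hm) hthird
  have hexp : Complex.exp (m * L) = ε := by
    have h21 : (Y 0).2.1 ≠ 0 := fun h ↦
      hthird (by simpa [charFunctional_apply, h, h01] using hannihilates)
    rw [hannihilates, mul_zero, add_zero] at hjordan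
    exact (mul_right_cancel₀ h21 hjordan).symm
  apply hε3
  calc ε ^ 3 = Complex.exp (m * L) ^ 2 * Complex.exp (-2 * m * L) := by rw [hexp, hexp_third]; ring
    _ = 1 := by
      rw [← Complex.exp_nat_mul, ← Complex.exp_add, ← Complex.exp_zero]
      push_cast
      ring_nf

lemma exists_charRoots_exp_eq (hL : 0 < L) (hY : SolvesLinearODE (companion lam) L Y)
    (h0 : Y 0 ≠ 0) (h01 : (Y 0).1 = 0) (hε : Y L = ε • Y 0) (hε3 : ε ^ 3 ≠ 1) :
    ∃ p q : ℂ, p ≠ q ∧ p ^ 3 + p + lam = 0 ∧ q ^ 3 + q + lam = 0 ∧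
      Complex.exp (p * L) = ε ∧ Complex.exp (q * L) = ε := by
  classical
  obtain ⟨s, hcard, hs⟩ := exists_finset_charRoots fun _ ↦
    three_mul_sq_add_one_ne_zero_of_quasiperiodic hL hY h0 h01 hε hε3
  have hannihilating : (s.filter fun m ↦ charFunctional m (Y 0) = 0).card ≤ 1 :=
    Finset.card_le_one.2 fun m hm n hn ↦ eq_of_charFunctional_eq_zero h0 h01
      (Finset.mem_filter.1 hm).2 (Finset.mem_filter.1 hn).2
  have hremaining : 1 < (s.filter fun m ↦ charFunctional m (Y 0) ≠ 0).card := by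
    have hsplit := s.card_filter_add_card_filter_not (fun m ↦ charFunctional m (Y 0) = 0)
    simp only [ne_eq]
    omega
  obtain ⟨p, hp, q, hq, hpq⟩ := Finset.one_lt_card.1 hremaining
  rw [Finset.mem_filter] at hp hq
  exact ⟨p, q, hpq, hs p hp.1, hs q hq.1,
    exp_eq_of_charFunctional_ne_zero hL.le hY hε (hs p hp.1) hp.2,
    exp_eq_of_charFunctional_ne_zero hL.le hY hε (hs q hq.1) hq.2⟩

end ThirdOrder

section CriticalLengths

variable {L : ℝ}

lemma cexp_eq_I_iff {z : ℂ} :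
    Complex.exp z = Complex.I ↔ ∃ k : ℤ, z = Real.pi * (1 / 2 + 2 * k) * Complex.I := by
  have hperiod := Complex.exp_eq_exp_iff_exists_int (x := z) (y := Real.pi / 2 * Complex.I)
  rw [Complex.exp_pi_div_two_mul_I] at hperiod
  refine hperiod.trans (exists_congr fun k ↦ ?_)
  rw [show (Real.pi / 2 * Complex.I + k * (2 * Real.pi * Complex.I) : ℂ)
    = Real.pi * (1 / 2 + 2 * k) * Complex.I by ring]

lemma sq_add_sq_add_mul_nonneg (a b : ℝ) : 0 ≤ a ^ 2 + b ^ 2 + a * b := by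
  nlinarith [sq_nonneg (a + b), sq_nonneg a, sq_nonneg b]

lemma mem_criticalR_iff_sq_eq (hL : 0 < L) : L ∈ criticalR ↔ ∃ k l : ℤ, k ≠ l ∧
    L ^ 2 = Real.pi ^ 2 * ((1 / 2 + 2 * (k : ℝ)) ^ 2 + (1 / 2 + 2 * (l : ℝ)) ^ 2
      + (1 / 2 + 2 * (k : ℝ)) * (1 / 2 + 2 * (l : ℝ))) := by
  refine exists_congr fun k ↦ exists_congr fun l ↦ and_congr_right fun _ ↦ ?_
  rw [← sq_eq_sq₀ hL.le (by positivity), mul_pow, Real.sq_sqrt (sq_add_sq_add_mul_nonneg _ _)]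

lemma sq_add_mul_add_sq_add_one_eq_zero_iff (hL : L ≠ 0) {a b : ℝ} {p q : ℂ}
    (hp : p * L = Real.pi * a * Complex.I) (hq : q * L = Real.pi * b * Complex.I) :
    p ^ 2 + p * q + q ^ 2 + 1 = 0 ↔ L ^ 2 = Real.pi ^ 2 * (a ^ 2 + b ^ 2 + a * b) := by
  have hscale : (L : ℂ) ^ 2 * (p ^ 2 + p * q + q ^ 2 + 1)
      = ((L ^ 2 - Real.pi ^ 2 * (a ^ 2 + b ^ 2 + a * b) : ℝ) : ℂ) := by
    calc (L : ℂ) ^ 2 * (p ^ 2 + p * q + q ^ 2 + 1)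
        = (p * L) ^ 2 + (p * L) * (q * L) + (q * L) ^ 2 + L ^ 2 := by ring
      _ = _ := by
        rw [hp, hq]
        push_cast
        linear_combination (Real.pi : ℂ) ^ 2 * (a ^ 2 + b ^ 2 + a * b) * Complex.I_sq
  have hLC : (L : ℂ) ^ 2 ≠ 0 := pow_ne_zero 2 (Complex.ofReal_ne_zero.2 hL)
  rw [← sub_eq_zero (a := L ^ 2), ← Complex.ofReal_eq_zero, ← hscale, mul_eq_zero_iff_left hLC]

lemma mem_criticalR_iff_exists_exp_eq_I (hL : 0 < L) : L ∈ criticalR ↔ ∃ p q : ℂ, p ≠ q ∧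
    p ^ 2 + p * q + q ^ 2 + 1 = 0 ∧
    Complex.exp (p * L) = Complex.I ∧ Complex.exp (q * L) = Complex.I := by
  have hLC : (L : ℂ) ≠ 0 := Complex.ofReal_ne_zero.2 hL.ne'
  rw [mem_criticalR_iff_sq_eq hL]
  constructor
  · rintro ⟨k, l, hkl, hsq⟩
    have hscaled (j : ℤ) : Real.pi * (1 / 2 + 2 * j) * Complex.I / L * L
        = Real.pi * ((1 / 2 + 2 * j : ℝ) : ℂ) * Complex.I := by
      rw [div_mul_cancel₀ _ hLC]; push_cast; rfl
    refine ⟨Real.pi * (1 / 2 + 2 * k) * Complex.I / L, Real.pi * (1 / 2 + 2 * l) * Complex.I / L,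
      ?_, (sq_add_mul_add_sq_add_one_eq_zero_iff hL.ne' (hscaled k) (hscaled l)).2 hsq,
      cexp_eq_I_iff.2 ⟨k, div_mul_cancel₀ _ hLC⟩,
      cexp_eq_I_iff.2 ⟨l, div_mul_cancel₀ _ hLC⟩⟩
    simpa [hLC, Real.pi_ne_zero] using hkl
  · rintro ⟨p, q, hpq, hchar, hp, hq⟩
    obtain ⟨k, hk⟩ := cexp_eq_I_iff.1 hp
    obtain ⟨l, hl⟩ := cexp_eq_I_iff.1 hq
    refine ⟨k, l, ?_, (sq_add_mul_add_sq_add_one_eq_zero_iff hL.ne' (by push_cast; exact hk)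
      (by push_cast; exact hl)).1 hchar⟩
    rintro rfl
    exact hpq (mul_right_cancel₀ hLC (hk.trans hl.symm))

lemma mem_criticalR_of_charRoots (hL : 0 < L) {lam ε p q : ℂ} (hε : ε ^ 2 = -1) (hpq : p ≠ q)
    (hp : p ^ 3 + p + lam = 0) (hq : q ^ 3 + q + lam = 0)
    (hpL : Complex.exp (p * L) = ε) (hqL : Complex.exp (q * L) = ε) : L ∈ criticalR := by
  have hchar : p ^ 2 + p * q + q ^ 2 + 1 = 0 :=
    mul_left_cancel₀ (sub_ne_zero.2 hpq) (by linear_combination hp - hq)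
  rw [mem_criticalR_iff_exists_exp_eq_I hL]
  rcases sq_eq_sq_iff_eq_or_eq_neg.1 (hε.trans Complex.I_sq.symm) with rfl | rfl
  · exact ⟨p, q, hpq, hchar, hpL, hqL⟩
  · exact ⟨-p, -q, neg_injective.ne hpq, by linear_combination hchar,
      by simp [Complex.exp_neg, hpL], by simp [Complex.exp_neg, hqL]⟩

end CriticalLengths

lemma exists_sq_eq_neg_one_add_smul_ne_zero {E : Type*} [AddCommGroup E] [Module ℂ E] {v w : E}
    (h : ¬(v = 0 ∧ w = 0)) : ∃ ε : ℂ, ε ^ 2 = -1 ∧ v + ε • w ≠ 0 := by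
  by_contra! hall
  have hplus : v + Complex.I • w = 0 := hall _ Complex.I_sq
  have hminus : v + (-Complex.I) • w = 0 := hall _ (by rw [neg_sq, Complex.I_sq])
  have hv : v = 0 := by
    linear_combination (norm := module) (1 / 2 : ℂ) • hplus + (1 / 2 : ℂ) • hminus
  exact h ⟨hv, by simpa [hv] using hplus⟩

section Eigenmodes

/-- `(θ, u)` solves the linearized Boussinesq eigenvalue problem on `[0, L]` with eigenvalue `lam`
under the eight boundary conditions of the theorem; the zero pair is allowed. -/
structure IsEigenmode (L : ℝ) (lam : ℂ) (θ u : ℝ → ℂ) : Prop where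
  contDiff_fst : ContDiff ℝ 3 θ
  contDiff_snd : ContDiff ℝ 3 u
  eq_fst : ∀ x ∈ Icc 0 L, -deriv u x - deriv (deriv (deriv u)) x = lam * θ x
  eq_snd : ∀ x ∈ Icc 0 L, -deriv θ x - deriv (deriv (deriv θ)) x = lam * u x
  fst_zero : θ 0 = 0
  fst_right : θ L = 0
  deriv_fst_zero : deriv θ 0 = 0
  deriv_deriv_fst_right : deriv (deriv θ) L = 0
  snd_zero : u 0 = 0
  snd_right : u L = 0
  deriv_snd_right : deriv u L = 0
  deriv_deriv_snd_zero : deriv (deriv u) 0 = 0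

/-- The state `(f, f', f'')` of a function, on which `companion` acts. -/
noncomputable def state (f : ℝ → ℂ) (x : ℝ) : ℂ × ℂ × ℂ :=
  (f x, deriv f x, deriv (deriv f) x)

lemma hasDerivAt_state {f : ℝ → ℂ} (hf : ContDiff ℝ 3 f) (x : ℝ) :
    HasDerivAt (state f) (deriv f x, deriv (deriv f) x, deriv (deriv (deriv f)) x) x := by
  have hdiff (n : ℕ) (hn : (n : WithTop ℕ∞) < 3) : DifferentiableAt ℝ (iteratedDeriv n f) x :=
    hf.differentiable_iteratedDeriv n hn x
  have h0 := (hdiff 0 (by norm_num)).hasDerivAt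
  have h1 := (hdiff 1 (by norm_num)).hasDerivAt
  have h2 := (hdiff 2 (by norm_num)).hasDerivAt
  simp only [iteratedDeriv_succ, iteratedDeriv_zero] at h0 h1 h2
  exact h0.prodMk (h1.prodMk h2)

variable {L : ℝ} {lam : ℂ} {θ u : ℝ → ℂ}

lemma IsEigenmode.solvesLinearODE_state_add (h : IsEigenmode L lam θ u) {σ : ℂ} (hσ : σ ^ 2 = 1) :
    SolvesLinearODE (companion (σ * lam)) L (fun x ↦ state θ x + σ • state u x) := by
  intro x hx
  refine ((hasDerivAt_state h.contDiff_fst x).add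
    ((hasDerivAt_state h.contDiff_snd x).const_smul σ)).congr_deriv ?_
  simp only [companion_apply, state, Prod.smul_mk, Prod.mk_add_mk, smul_eq_mul,
    Prod.mk.injEq, true_and]
  linear_combination -h.eq_snd x hx - σ * h.eq_fst x hx + lam * u x * hσ

/-- The state of `θ + u`, which solves the companion equation for `lam`. -/
noncomputable def sumState (θ u : ℝ → ℂ) (x : ℝ) : ℂ × ℂ × ℂ :=
  state θ x + (1 : ℂ) • state u x

/-- The state of `x ↦ (θ - u) (L - x)`; the reflection turns the companion equation for `-lam`
solved by `θ - u` into the one for `lam`. -/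
noncomputable def reflectedDiffState (L : ℝ) (θ u : ℝ → ℂ) (x : ℝ) : ℂ × ℂ × ℂ :=
  stateReflection (state θ (L - x) + (-1 : ℂ) • state u (L - x))

lemma IsEigenmode.solvesLinearODE_sumState (h : IsEigenmode L lam θ u) :
    SolvesLinearODE (companion lam) L (sumState θ u) :=
  one_mul lam ▸ h.solvesLinearODE_state_add (one_pow 2)

lemma IsEigenmode.solvesLinearODE_reflectedDiffState (h : IsEigenmode L lam θ u) :
    SolvesLinearODE (companion lam) L (reflectedDiffState L θ u) :=
  (h.solvesLinearODE_state_add (σ := -1) (by norm_num)).comp_const_sub fun v ↦ by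
    rw [companion_stateReflection, neg_one_mul]

lemma IsEigenmode.reflectedDiffState_zero (h : IsEigenmode L lam θ u) :
    reflectedDiffState L θ u 0 = -sumState θ u L := by
  simp [reflectedDiffState, sumState, stateReflection_apply, state, h.fst_right, h.snd_right,
    h.deriv_snd_right, h.deriv_deriv_fst_right]

lemma IsEigenmode.reflectedDiffState_right (h : IsEigenmode L lam θ u) :
    reflectedDiffState L θ u L = sumState θ u 0 := by
  simp [reflectedDiffState, sumState, stateReflection_apply, state, h.fst_zero, h.snd_zero,
    h.deriv_fst_zero, h.deriv_deriv_snd_zero]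

lemma IsEigenmode.eq_zero (h : IsEigenmode L lam θ u) (hsum : sumState θ u 0 = 0)
    (hdiff : reflectedDiffState L θ u 0 = 0) : ∀ x ∈ Icc 0 L, θ x = 0 ∧ u x = 0 := by
  intro x hx
  have hx' : L - x ∈ Icc 0 L := ⟨by linarith [hx.2], by linarith [hx.1]⟩
  have hadd : θ x + u x = 0 := by
    simpa [sumState, state] using congrArg Prod.fst (h.solvesLinearODE_sumState.eq_zero hsum x hx)
  have hsub : θ x - u x = 0 := by
    simpa [reflectedDiffState, stateReflection_apply, state, ← sub_eq_add_neg] using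
      congrArg Prod.fst (h.solvesLinearODE_reflectedDiffState.eq_zero hdiff _ hx')
  exact ⟨by linear_combination (hadd + hsub) / 2, by linear_combination (hadd - hsub) / 2⟩

theorem IsEigenmode.mem_criticalR (hL : 0 < L) (h : IsEigenmode L lam θ u)
    (hne : ¬∀ x ∈ Icc 0 L, θ x = 0 ∧ u x = 0) : L ∈ criticalR := by
  obtain ⟨ε, hε, h0⟩ := exists_sq_eq_neg_one_add_smul_ne_zero fun h0 ↦ hne (h.eq_zero h0.1 h0.2)
  have h01 : (sumState θ u 0 + ε • reflectedDiffState L θ u 0).1 = 0 := by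
    rw [h.reflectedDiffState_zero]
    simp [sumState, state, h.fst_zero, h.fst_right, h.snd_zero, h.snd_right]
  have hquasi : sumState θ u L + ε • reflectedDiffState L θ u L
      = ε • (sumState θ u 0 + ε • reflectedDiffState L θ u 0) := by
    rw [h.reflectedDiffState_zero, h.reflectedDiffState_right, smul_add, smul_smul, ← sq, hε]
    module
  have hε3 : ε ^ 3 ≠ 1 := fun hε3 ↦ by
    have hε1 : ε = -1 := by linear_combination ε * hε - hε3
    norm_num [hε1] at hε
  obtain ⟨p, q, hpq, hp, hq, hpL, hqL⟩ := exists_charRoots_exp_eq hL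
    (h.solvesLinearODE_sumState.add_const_smul h.solvesLinearODE_reflectedDiffState ε)
    h0 h01 hquasi hε3
  exact mem_criticalR_of_charRoots hL hε hpq hp hq hpL hqL

end Eigenmodes

section HyperbolicModes

/-- A combination of two hyperbolic cosines of different frequencies. Together with `sinhDiff` it
forms a family closed under differentiation, which contains the explicit eigenmodes. -/
noncomputable def coshDiff (a b p q : ℂ) (x : ℝ) : ℂ :=
  a * Complex.cosh (p * x) - b * Complex.cosh (q * x)

/-- The counterpart of `coshDiff` for hyperbolic sines. -/
noncomputable def sinhDiff (a b p q : ℂ) (x : ℝ) : ℂ :=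
  a * Complex.sinh (p * x) - b * Complex.sinh (q * x)

variable {L : ℝ} (a b p q : ℂ)

lemma hasDerivAt_coshDiff (x : ℝ) :
    HasDerivAt (coshDiff a b p q) (sinhDiff (a * p) (b * q) p q x) x := by
  have hcosh (c m : ℂ) : HasDerivAt (fun z : ℂ ↦ c * Complex.cosh (m * z))
      (c * m * Complex.sinh (m * x)) x :=
    ((hasDerivAt_const_mul m).ccosh.const_mul c).congr_deriv (by ring)
  exact ((hcosh a p).sub (hcosh b q)).comp_ofReal

lemma hasDerivAt_sinhDiff (x : ℝ) :
    HasDerivAt (sinhDiff a b p q) (coshDiff (a * p) (b * q) p q x) x := by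
  have hsinh (c m : ℂ) : HasDerivAt (fun z : ℂ ↦ c * Complex.sinh (m * z))
      (c * m * Complex.cosh (m * x)) x :=
    ((hasDerivAt_const_mul m).csinh.const_mul c).congr_deriv (by ring)
  exact ((hsinh a p).sub (hsinh b q)).comp_ofReal

lemma deriv_coshDiff : deriv (coshDiff a b p q) = sinhDiff (a * p) (b * q) p q :=
  deriv_eq (hasDerivAt_coshDiff a b p q)

lemma deriv_sinhDiff : deriv (sinhDiff a b p q) = coshDiff (a * p) (b * q) p q :=
  deriv_eq (hasDerivAt_sinhDiff a b p q)

lemma contDiff_coshDiff {n : WithTop ℕ∞} : ContDiff ℝ n (coshDiff a b p q) := by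
  have h : ContDiff ℂ n (fun z : ℂ ↦ a * Complex.cosh (p * z) - b * Complex.cosh (q * z)) := by
    fun_prop
  exact (h.restrict_scalars ℝ).comp Complex.ofRealCLM.contDiff

lemma contDiff_sinhDiff {n : WithTop ℕ∞} : ContDiff ℝ n (sinhDiff a b p q) := by
  have h : ContDiff ℂ n (fun z : ℂ ↦ a * Complex.sinh (p * z) - b * Complex.sinh (q * z)) := by
    fun_prop
  exact (h.restrict_scalars ℝ).comp Complex.ofRealCLM.contDiff

lemma coshDiff_zero : coshDiff a b p q 0 = a - b := by simp [coshDiff]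

lemma sinhDiff_zero : sinhDiff a b p q 0 = 0 := by simp [sinhDiff]

variable {p q}

lemma coshDiff_eq_zero_of_exp_eq_I (hp : Complex.exp (p * L) = Complex.I)
    (hq : Complex.exp (q * L) = Complex.I) : coshDiff a b p q L = 0 := by
  simp [coshDiff, Complex.cosh, Complex.exp_neg, hp, hq]

lemma sinhDiff_eq_of_exp_eq_I (hp : Complex.exp (p * L) = Complex.I)
    (hq : Complex.exp (q * L) = Complex.I) : sinhDiff a b p q L = (a - b) * Complex.I := by
  simp only [sinhDiff, Complex.sinh, Complex.exp_neg, hp, hq, Complex.inv_I]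
  ring

lemma isEigenmode_coshDiff_sinhDiff (hchar : p ^ 2 + p * q + q ^ 2 + 1 = 0)
    (hp : Complex.exp (p * L) = Complex.I) (hq : Complex.exp (q * L) = Complex.I) :
    IsEigenmode L (-(p ^ 3 + p)) (coshDiff 1 1 p q) (sinhDiff 1 1 p q) := by
  have hcubic : p ^ 3 + p = q ^ 3 + q := by linear_combination (p - q) * hchar
  constructor
  case contDiff_fst => exact contDiff_coshDiff ..
  case contDiff_snd => exact contDiff_sinhDiff ..
  case eq_fst =>
    intro x _
    simp only [deriv_coshDiff, deriv_sinhDiff, coshDiff]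
    linear_combination -Complex.cosh (q * x) * hcubic
  case eq_snd =>
    intro x _
    simp only [deriv_coshDiff, deriv_sinhDiff, sinhDiff]
    linear_combination -Complex.sinh (q * x) * hcubic
  all_goals simp only [deriv_coshDiff, deriv_sinhDiff, coshDiff_zero, sinhDiff_zero,
    coshDiff_eq_zero_of_exp_eq_I _ _ hp hq, sinhDiff_eq_of_exp_eq_I _ _ hp hq, sub_self, zero_mul]

lemma not_forall_sinhDiff_eq_zero (hL : 0 < L) (hpq : p ≠ q) :
    ¬∀ x ∈ Icc 0 L, sinhDiff 1 1 p q x = 0 := fun h ↦ by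
  have hderiv := eq_zero_of_hasDerivAt_of_eqOn_Icc hL (hasDerivAt_sinhDiff 1 1 p q 0) h
  rw [coshDiff_zero, one_mul, one_mul, sub_eq_zero] at hderiv
  exact hpq hderiv

end HyperbolicModes

theorem statement_7 (L : ℝ) (hL : 0 < L) :
    (∃ (lam : ℂ) (θ u : ℝ → ℂ),
      ContDiff ℝ 3 θ ∧ ContDiff ℝ 3 u ∧
      ¬(∀ x ∈ Icc (0 : ℝ) L, θ x = 0 ∧ u x = 0) ∧
      (∀ x ∈ Icc (0 : ℝ) L, -deriv u x - deriv (deriv (deriv u)) x = lam * θ x) ∧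
      (∀ x ∈ Icc (0 : ℝ) L, -deriv θ x - deriv (deriv (deriv θ)) x = lam * u x) ∧
      θ 0 = 0 ∧ θ L = 0 ∧ deriv θ 0 = 0 ∧ deriv (deriv θ) L = 0 ∧
      u 0 = 0 ∧ u L = 0 ∧ deriv u L = 0 ∧ deriv (deriv u) 0 = 0) ↔ L ∈ criticalR := by
  constructor
  · rintro ⟨lam, θ, u, hθ, hu, hne, hθeq, hueq, hθ0, hθL, hθ0', hθL', hu0, huL, huL', hu0'⟩
    exact IsEigenmode.mem_criticalR hL
      ⟨hθ, hu, hθeq, hueq, hθ0, hθL, hθ0', hθL', hu0, huL, huL', hu0'⟩ hne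
  · intro hmem
    obtain ⟨p, q, hpq, hchar, hp, hq⟩ := (mem_criticalR_iff_exists_exp_eq_I hL).1 hmem
    obtain ⟨hθ, hu, hθeq, hueq, hθ0, hθL, hθ0', hθL', hu0, huL, huL', hu0'⟩ :=
      isEigenmode_coshDiff_sinhDiff hchar hp hq
    have hne := not_forall_sinhDiff_eq_zero hL hpq
    exact ⟨_, _, _, hθ, hu, fun h ↦ hne fun x hx ↦ (h x hx).2,
      hθeq, hueq, hθ0, hθL, hθ0', hθL', hu0, huL, huL', hu0'⟩
end

section
/- Let L > 0. There exist λ ∈ ℂ and three times continuously differentiable functions θ, u : [0,L] → ℂ, not both identically zero, satisfying −u′(x) − u‴(x) = λ·θ(x) and −θ′(x) − θ‴(x) = λ·u(x) for all x ∈ [0,L], with boundary conditions θ(0) = θ(L) = θ′(0) = θ″(L) = 0 and u(0) = u(L) = u′(L) = 0, together with the additional condition θ″(0) = 0, if and only if L ∈ 𝒩₃. -/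
open Set

/-!
In the unknowns `v = θ + u` and `w = θ - u` the system decouples into the eigenvalue equations
`v‴ + v′ + λ v = 0` and `w‴ + w′ - λ w = 0`. The two equations are adjoint to each other, so the
concomitants of `v`, `v′`, `v″` with `w` are conserved. At the boundary these laws read
`v′(0)² + v′(L)² = 0`, `v′(L) v″(L) = 0` and `v″(0)² = v″(L)²`. Pairing `v` instead with `e^{-zx}`,
where `z³ + z + λ = 0`, gives `v″(L) + z v′(L) = e^{zL} (v″(0) + z v′(0))`. The roots `z` sum to
zero, so the three numbers `e^{zL}` have product one, and comparing this with the conservation laws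
forces `v′(0) = v′(L) = 0` and `e^{zL} = 1` at every root. A double root would also give the test
function `x e^{-zx}`, which is incompatible with `v″(L) ≠ 0`. Hence the roots are `2πi/L` times
three distinct integers `m, n, p` with sum zero, and `mn + mp + np = -L²/(4π²)`, which is the
parametrization of `𝒩₃` with `k = m - n` and `l = n - p`.

Conversely, for such `L` every solution of `v‴ + v′ + λ v = 0` is `L`-periodic. Take the one with
`v(0) = v′(0) = 0 ≠ v″(0)` and `w(x) = -v(-x)`, so that `θ` and `u` are its odd and even parts.
-/

open Complex (exp)

section Calculus

variable {F : Type*} [NormedAddCommGroup F] [NormedSpace ℝ F] {f g : ℝ → F} {a b : ℝ}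

lemma eq_of_forall_hasDerivAt_zero (hab : a ≤ b) (hf : ∀ x ∈ Icc a b, HasDerivAt f 0 x) :
    f b = f a :=
  constant_of_has_deriv_right_zero (fun x hx ↦ (hf x hx).continuousAt.continuousWithinAt)
    (fun x hx ↦ (hf x (Ico_subset_Icc_self hx)).hasDerivWithinAt) b (right_mem_Icc.2 hab)

lemma eqOn_deriv_zero_of_eqOn_zero_Icc (hab : a < b) (hf : Differentiable ℝ f)
    (h : EqOn f 0 (Icc a b)) : EqOn (deriv f) 0 (Icc a b) := by
  intro x hx
  rw [← (hf x).derivWithin (uniqueDiffOn_Icc hab x hx), derivWithin_congr h (h hx),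
    derivWithin_zero]

lemma differentiable_deriv_of_contDiff_three (hf : ContDiff ℝ 3 f) : Differentiable ℝ (deriv f) :=
  (hf.iterate_deriv' 2 1).differentiable two_ne_zero

lemma differentiable_deriv_deriv_of_contDiff_three (hf : ContDiff ℝ 3 f) :
    Differentiable ℝ (deriv (deriv f)) :=
  (hf.iterate_deriv' 1 2).differentiable one_ne_zero

lemma deriv_add_of_differentiable (hf : Differentiable ℝ f) (hg : Differentiable ℝ g) :
    deriv (f + g) = deriv f + deriv g :=
  funext fun x ↦ deriv_add (hf x) (hg x)

lemma deriv_deriv_add_of_contDiff_three (hf : ContDiff ℝ 3 f) (hg : ContDiff ℝ 3 g) :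
    deriv (deriv (f + g)) = deriv (deriv f) + deriv (deriv g) := by
  rw [deriv_add_of_differentiable (hf.differentiable three_ne_zero)
      (hg.differentiable three_ne_zero),
    deriv_add_of_differentiable (differentiable_deriv_of_contDiff_three hf)
      (differentiable_deriv_of_contDiff_three hg)]

lemma deriv_deriv_deriv_add_of_contDiff_three (hf : ContDiff ℝ 3 f) (hg : ContDiff ℝ 3 g) :
    deriv (deriv (deriv (f + g))) = deriv (deriv (deriv f)) + deriv (deriv (deriv g)) := by
  rw [deriv_deriv_add_of_contDiff_three hf hg,
    deriv_add_of_differentiable (differentiable_deriv_deriv_of_contDiff_three hf)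
      (differentiable_deriv_deriv_of_contDiff_three hg)]

lemma deriv_sub_of_differentiable (hf : Differentiable ℝ f) (hg : Differentiable ℝ g) :
    deriv (f - g) = deriv f - deriv g :=
  funext fun x ↦ deriv_sub (hf x) (hg x)

lemma deriv_deriv_sub_of_contDiff_three (hf : ContDiff ℝ 3 f) (hg : ContDiff ℝ 3 g) :
    deriv (deriv (f - g)) = deriv (deriv f) - deriv (deriv g) := by
  rw [deriv_sub_of_differentiable (hf.differentiable three_ne_zero)
      (hg.differentiable three_ne_zero),
    deriv_sub_of_differentiable (differentiable_deriv_of_contDiff_three hf)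
      (differentiable_deriv_of_contDiff_three hg)]

lemma deriv_deriv_deriv_sub_of_contDiff_three (hf : ContDiff ℝ 3 f) (hg : ContDiff ℝ 3 g) :
    deriv (deriv (deriv (f - g))) = deriv (deriv (deriv f)) - deriv (deriv (deriv g)) := by
  rw [deriv_deriv_sub_of_contDiff_three hf hg,
    deriv_sub_of_differentiable (differentiable_deriv_deriv_of_contDiff_three hf)
      (differentiable_deriv_deriv_of_contDiff_three hg)]

end Calculus

/-- A `C³` solution on `[0, L]` of `v‴ + v′ + μ v = 0`, the eigenvalue equation of the linearized
Korteweg-de Vries operator; the derivatives are those of an extension of `v` to the real line. -/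
structure IsKdVMode (L : ℝ) (μ : ℂ) (v : ℝ → ℂ) : Prop where
  contDiff : ContDiff ℝ 3 v
  ode : ∀ x ∈ Icc 0 L, deriv (deriv (deriv v)) x = -(μ * v x + deriv v x)

/-- The bilinear concomitant in Lagrange's identity for the operator `v‴ + v′`. -/
noncomputable def concomitant (v w : ℝ → ℂ) (x : ℝ) : ℂ :=
  deriv (deriv v) x * w x - deriv v x * deriv w x + v x * deriv (deriv w) x + v x * w x

/-- The concomitant of `v′` and `w`, written without the third derivative of `v`: the extension
of `v` need not be four times differentiable. -/
noncomputable def concomitantDeriv (μ : ℂ) (v w : ℝ → ℂ) (x : ℝ) : ℂ :=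
  deriv v x * deriv (deriv w) x - deriv (deriv v) x * deriv w x - μ * (v x * w x)

/-- The concomitant of `v″` and `w`, written without the third and fourth derivatives of `v`. -/
noncomputable def concomitantDeriv₂ (μ : ℂ) (v w : ℝ → ℂ) (x : ℝ) : ℂ :=
  deriv (deriv v) x * deriv (deriv w) x + deriv v x * deriv w x
    + μ * (v x * deriv w x - deriv v x * w x)

namespace IsKdVMode

variable {L : ℝ} {μ : ℂ} {v w : ℝ → ℂ}

lemma differentiable (hv : IsKdVMode L μ v) : Differentiable ℝ v :=
  hv.contDiff.differentiable (by norm_num)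

lemma differentiable_deriv (hv : IsKdVMode L μ v) : Differentiable ℝ (deriv v) :=
  differentiable_deriv_of_contDiff_three hv.contDiff

lemma hasDerivAt (hv : IsKdVMode L μ v) (x : ℝ) : HasDerivAt v (deriv v x) x :=
  (hv.differentiable x).hasDerivAt

lemma hasDerivAt_deriv (hv : IsKdVMode L μ v) (x : ℝ) :
    HasDerivAt (deriv v) (deriv (deriv v) x) x :=
  (hv.differentiable_deriv x).hasDerivAt

lemma hasDerivAt_deriv_deriv (hv : IsKdVMode L μ v) {x : ℝ} (hx : x ∈ Icc 0 L) :
    HasDerivAt (deriv (deriv v)) (-(μ * v x + deriv v x)) x :=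
  hv.ode x hx ▸ (differentiable_deriv_deriv_of_contDiff_three hv.contDiff x).hasDerivAt

lemma eqOn_zero (hv : IsKdVMode L μ v) (h₀ : v 0 = 0) (h₁ : deriv v 0 = 0)
    (h₂ : deriv (deriv v) 0 = 0) : EqOn v 0 (Icc 0 L) := by
  let A : ℂ × ℂ × ℂ →L[ℂ] ℂ × ℂ × ℂ :=
    let y := ContinuousLinearMap.fst ℂ ℂ (ℂ × ℂ)
    let y₁ := (ContinuousLinearMap.fst ℂ ℂ ℂ).comp (.snd ℂ ℂ (ℂ × ℂ))
    let y₂ := (ContinuousLinearMap.snd ℂ ℂ ℂ).comp (.snd ℂ ℂ (ℂ × ℂ))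
    y₁.prod (y₂.prod (-(μ • y + y₁)))
  let jet : ℝ → ℂ × ℂ × ℂ := fun x ↦ (v x, deriv v x, deriv (deriv v) x)
  have hjet : ∀ x ∈ Icc 0 L, HasDerivAt jet (A (jet x)) x := fun x hx ↦
    (hv.hasDerivAt x).prodMk ((hv.hasDerivAt_deriv x).prodMk (hv.hasDerivAt_deriv_deriv hx))
  have hzero : EqOn jet 0 (Icc 0 L) := by
    refine ODE_solution_unique (v := fun _ ↦ A) (fun _ ↦ A.lipschitz)
      (fun x hx ↦ (hjet x hx).continuousAt.continuousWithinAt)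
      (fun x hx ↦ (hjet x (Ico_subset_Icc_self hx)).hasDerivWithinAt)
      continuousOn_const (fun x _ ↦ ?_) (by simp [jet, h₀, h₁, h₂])
    exact (A.map_zero).symm ▸ hasDerivWithinAt_const x (Ici x) (0 : ℂ × ℂ × ℂ)
  exact fun x hx ↦ congrArg Prod.fst (hzero hx)

lemma concomitant_eq (hL : 0 ≤ L) (hv : IsKdVMode L μ v) (hw : IsKdVMode L (-μ) w) :
    concomitant v w L = concomitant v w 0 := by
  refine eq_of_forall_hasDerivAt_zero hL fun x hx ↦ ?_
  refine (((((hv.hasDerivAt_deriv_deriv hx).mul (hw.hasDerivAt x)).sub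
    ((hv.hasDerivAt_deriv x).mul (hw.hasDerivAt_deriv x))).add
    ((hv.hasDerivAt x).mul (hw.hasDerivAt_deriv_deriv hx))).add
    ((hv.hasDerivAt x).mul (hw.hasDerivAt x))).congr_deriv ?_
  ring

lemma concomitantDeriv_eq (hL : 0 ≤ L) (hv : IsKdVMode L μ v) (hw : IsKdVMode L (-μ) w) :
    concomitantDeriv μ v w L = concomitantDeriv μ v w 0 := by
  refine eq_of_forall_hasDerivAt_zero hL fun x hx ↦ ?_
  refine ((((hv.hasDerivAt_deriv x).mul (hw.hasDerivAt_deriv_deriv hx)).sub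
    ((hv.hasDerivAt_deriv_deriv hx).mul (hw.hasDerivAt_deriv x))).sub
    (((hv.hasDerivAt x).mul (hw.hasDerivAt x)).const_mul μ)).congr_deriv ?_
  ring

lemma concomitantDeriv₂_eq (hL : 0 ≤ L) (hv : IsKdVMode L μ v) (hw : IsKdVMode L (-μ) w) :
    concomitantDeriv₂ μ v w L = concomitantDeriv₂ μ v w 0 := by
  refine eq_of_forall_hasDerivAt_zero hL fun x hx ↦ ?_
  refine ((((hv.hasDerivAt_deriv_deriv hx).mul (hw.hasDerivAt_deriv_deriv hx)).add
    ((hv.hasDerivAt_deriv x).mul (hw.hasDerivAt_deriv x))).add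
    ((((hv.hasDerivAt x).mul (hw.hasDerivAt_deriv x)).sub
    ((hv.hasDerivAt_deriv x).mul (hw.hasDerivAt x))).const_mul μ)).congr_deriv ?_
  ring

end IsKdVMode

section AffineExp

/-- The function `(p + q x) e^{zx}`, a solution of a constant-coefficient linear equation for
every `p` if `q = 0` and `z` is a characteristic root, and for every `p` and `q` if `z` is a
double root. -/
noncomputable def affineExp (p q z : ℂ) (x : ℝ) : ℂ :=
  (p + q * x) * exp (z * x)

lemma affineExp_of_exp_eq_one {p z : ℂ} {x : ℝ} (h : exp (z * x) = 1) : affineExp p 0 z x = p := by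
  simp [affineExp, h]

lemma contDiff_affineExp (p q z : ℂ) {n : WithTop ℕ∞} : ContDiff ℝ n (affineExp p q z) := by
  have hid : ContDiff ℝ n fun x : ℝ ↦ (x : ℂ) := Complex.ofRealCLM.contDiff
  exact (contDiff_const.add (contDiff_const.mul hid)).mul (contDiff_const.mul hid).cexp

lemma deriv_affineExp (p q z : ℂ) :
    deriv (affineExp p q z) = affineExp (z * p + q) (z * q) z := by
  funext x
  have hmul (c : ℂ) : HasDerivAt (fun x : ℝ ↦ c * (x : ℂ)) c x := by
    simpa using (hasDerivAt_id x).ofReal_comp.const_mul c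
  refine ((((hmul q).const_add p).mul (hmul z).cexp).congr_deriv ?_).deriv
  simp only [affineExp]
  ring

variable {ι : Type*} [Fintype ι]

lemma deriv_sum_affineExp (p q z : ι → ℂ) :
    deriv (∑ j, affineExp (p j) (q j) (z j))
      = ∑ j, affineExp (z j * p j + q j) (z j * q j) (z j) := by
  funext x
  rw [deriv_sum fun j _ ↦ (contDiff_affineExp _ _ _ (n := 1)).differentiable one_ne_zero x]
  simp only [deriv_affineExp, Finset.sum_apply]

lemma isKdVMode_sum_affineExp {L : ℝ} {μ : ℂ} {p q z : ι → ℂ}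
    (hroot : ∀ j, z j ^ 3 + z j + μ = 0) (hdouble : ∀ j, q j * (3 * z j ^ 2 + 1) = 0) :
    IsKdVMode L μ (∑ j, affineExp (p j) (q j) (z j)) where
  contDiff := by
    have := ContDiff.sum (s := Finset.univ) fun j _ ↦ contDiff_affineExp (p j) (q j) (z j) (n := 3)
    convert this
    simp
  ode x _ := by
    simp only [deriv_sum_affineExp, Finset.sum_apply, Finset.mul_sum, ← Finset.sum_add_distrib,
      ← Finset.sum_neg_distrib]
    refine Finset.sum_congr rfl fun j _ ↦ ?_
    simp only [affineExp]
    linear_combination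
      exp (z j * x) * ((p j + q j * x) * hroot j + hdouble j)

lemma isKdVMode_affineExp {L : ℝ} {μ p q z : ℂ} (hroot : z ^ 3 + z + μ = 0)
    (hdouble : q * (3 * z ^ 2 + 1) = 0) : IsKdVMode L μ (affineExp p q z) := by
  simpa using isKdVMode_sum_affineExp (ι := Unit) (p := fun _ ↦ p) (fun _ ↦ hroot)
    (fun _ ↦ hdouble)

end AffineExp

namespace IsKdVMode

variable {L : ℝ} {μ z : ℂ} {v : ℝ → ℂ}

lemma deriv_deriv_add_mul_deriv_eq (hL : 0 ≤ L) (hv : IsKdVMode L μ v) (h₀ : v 0 = 0)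
    (hvL : v L = 0) (hz : z ^ 3 + z + μ = 0) :
    deriv (deriv v) L + z * deriv v L
      = exp (z * L) * (deriv (deriv v) 0 + z * deriv v 0) := by
  have hexp : IsKdVMode L (-μ) (affineExp 1 0 (-z)) :=
    isKdVMode_affineExp (by linear_combination -hz) (zero_mul _)
  have key := concomitant_eq hL hv hexp
  simp only [concomitant, deriv_affineExp, affineExp, h₀, hvL, neg_mul, Complex.exp_neg,
    Complex.ofReal_zero, mul_zero, Complex.exp_zero] at key
  field_simp at key
  rw [mul_comm z (L : ℂ)]
  linear_combination key

lemma deriv_eq_of_double_root (hL : 0 ≤ L) (hv : IsKdVMode L μ v) (h₀ : v 0 = 0)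
    (hvL : v L = 0) (hz : z ^ 3 + z + μ = 0) (hdouble : 3 * z ^ 2 + 1 = 0) :
    deriv v L = L * (deriv (deriv v) L + z * deriv v L) + exp (z * L) * deriv v 0 := by
  have hexp : IsKdVMode L (-μ) (affineExp 0 1 (-z)) :=
    isKdVMode_affineExp (by linear_combination -hz) (by linear_combination hdouble)
  have key := concomitant_eq hL hv hexp
  simp only [concomitant, deriv_affineExp, affineExp, h₀, hvL, neg_mul, Complex.exp_neg,
    Complex.ofReal_zero, mul_zero, Complex.exp_zero] at key
  field_simp at key
  rw [mul_comm z (L : ℂ)]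
  linear_combination -key

end IsKdVMode

/-- The roots of `z³ + z + μ`, listed with multiplicity, characterized by Vieta's formulas. -/
structure CharRoots (μ s t r : ℂ) : Prop where
  sum_eq : s + t + r = 0
  sum_mul_eq : s * t + s * r + t * r = 1
  mul_eq : s * t * r = -μ

namespace CharRoots

variable {L : ℝ} {μ s t r : ℂ}

lemma rotate (h : CharRoots μ s t r) : CharRoots μ t r s where
  sum_eq := by linear_combination h.sum_eq
  sum_mul_eq := by linear_combination h.sum_mul_eq
  mul_eq := by linear_combination h.mul_eq

lemma eval_left (h : CharRoots μ s t r) : s ^ 3 + s + μ = 0 := by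
  linear_combination s ^ 2 * h.sum_eq - s * h.sum_mul_eq + h.mul_eq

lemma double_root (h : CharRoots μ s t r) (hst : s = t) : 3 * s ^ 2 + 1 = 0 := by
  subst hst
  linear_combination 2 * s * h.sum_eq - h.sum_mul_eq

lemma exp_mul_exp_mul_exp (h : CharRoots μ s t r) (x : ℂ) :
    exp (s * x) * exp (t * x) * exp (r * x) = 1 := by
  rw [← Complex.exp_add, ← Complex.exp_add, ← add_mul, ← add_mul, h.sum_eq, zero_mul,
    Complex.exp_zero]

lemma pow_three_eq (h : CharRoots μ s t r) {x a c : ℂ} (hs : c = exp (s * x) * a)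
    (ht : c = exp (t * x) * a) (hr : c = exp (r * x) * a) : c ^ 3 = a ^ 3 :=
  calc c ^ 3 = exp (s * x) * a * (exp (t * x) * a) * (exp (r * x) * a) := by
        rw [← hs, ← ht, ← hr, pow_three']
    _ = exp (s * x) * exp (t * x) * exp (r * x) * a ^ 3 := by ring
    _ = a ^ 3 := by rw [h.exp_mul_exp_mul_exp, one_mul]

end CharRoots

lemma exists_charRoots (μ : ℂ) : ∃ s t r, CharRoots μ s t r := by
  let P : Cubic ℂ := ⟨1, 0, 1, μ⟩
  have ha : P.a ≠ 0 := one_ne_zero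
  obtain ⟨s, t, r, h⟩ :=
    (Cubic.splits_iff_roots_eq_three (φ := .id ℂ) ha).1 (IsAlgClosed.splits _)
  have hb : (0 : ℂ) = 1 * -(s + t + r) := Cubic.b_eq_three_roots ha h
  have hc : (1 : ℂ) = 1 * (s * t + s * r + t * r) := Cubic.c_eq_three_roots ha h
  have hd : μ = 1 * -(s * t * r) := Cubic.d_eq_three_roots ha h
  exact ⟨s, t, r, by linear_combination hb, by linear_combination -hc, by linear_combination hd⟩

section Arithmetic

variable {L : ℝ}

lemma mem_criticalN3_iff_sq_eq (hL : 0 ≤ L) :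
    L ∈ criticalN3 ↔ ∃ k l : ℕ, 0 < k ∧ 0 < l ∧ 3 ∣ 2 * k + l ∧
      3 * L ^ 2 = 4 * Real.pi ^ 2 * ((k : ℝ) ^ 2 + k * l + l ^ 2) := by
  refine exists₂_congr fun k l ↦ and_congr_right' <| and_congr_right' <| and_congr_right' ?_
  rw [← sq_eq_sq₀ hL (by positivity), mul_pow, div_pow, Real.sq_sqrt (by positivity),
    Real.sq_sqrt (by positivity), ← mul_right_inj' (three_ne_zero (α := ℝ))]
  ring_nf

lemma mem_criticalN3_of_strictAnti_ints (hL : 0 ≤ L) {m n p : ℤ} (hnm : n < m) (hpn : p < n)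
    (hsum : m + n + p = 0)
    (hsq : L ^ 2 = -(4 * Real.pi ^ 2 * ((m : ℝ) * n + m * p + n * p))) : L ∈ criticalN3 := by
  obtain ⟨k, hk⟩ := Int.eq_ofNat_of_zero_le (sub_nonneg.2 hnm.le)
  obtain ⟨l, hl⟩ := Int.eq_ofNat_of_zero_le (sub_nonneg.2 hpn.le)
  refine (mem_criticalN3_iff_sq_eq hL).2 ⟨k, l, by lia, by lia, by lia, ?_⟩
  have hkR : (k : ℝ) = m - n := by exact_mod_cast hk.symm
  have hlR : (l : ℝ) = n - p := by exact_mod_cast hl.symm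
  have hsumR : (m + n + p : ℝ) = 0 := by exact_mod_cast hsum
  rw [hkR, hlR]
  linear_combination 3 * hsq - 4 * Real.pi ^ 2 * (m + n + p) * hsumR

lemma mem_criticalN3_iff_exists_ints (hL : 0 ≤ L) :
    L ∈ criticalN3 ↔ ∃ m n p : ℤ, (m ≠ n ∧ m ≠ p ∧ n ≠ p) ∧ m + n + p = 0 ∧
      L ^ 2 = -(4 * Real.pi ^ 2 * ((m : ℝ) * n + m * p + n * p)) := by
  constructor
  · rw [mem_criticalN3_iff_sq_eq hL]
    rintro ⟨k, l, hk, hl, ⟨m, hm⟩, hsq⟩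
    refine ⟨m, m - k, m - k - l, by lia, by lia, ?_⟩
    have hlR : (l : ℝ) = 3 * m - 2 * k := by
      rw [eq_sub_iff_add_eq']
      exact_mod_cast hm
    push_cast
    rw [hlR] at hsq ⊢
    linear_combination hsq / 3
  · rintro ⟨m, n, p, ⟨hmn, hmp, hnp⟩, hsum, hsq⟩
    wlog hlt : n < m generalizing m n
    · exact this n m hmn.symm hnp hmp (by lia) (by linear_combination hsq) (by lia)
    rcases lt_or_gt_of_ne hnp with hnp | hpn
    · rcases lt_or_gt_of_ne hmp with hmp | hpm
      · exact mem_criticalN3_of_strictAnti_ints hL hmp hlt (by lia) (by linear_combination hsq)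
      · exact mem_criticalN3_of_strictAnti_ints hL hpm hnp (by lia) (by linear_combination hsq)
    · exact mem_criticalN3_of_strictAnti_ints hL hlt hpn hsum hsq

lemma exp_mul_eq_one_iff (hL : L ≠ 0) {z : ℂ} :
    exp (z * L) = 1 ↔ ∃ n : ℤ, z = n * (2 * Real.pi * Complex.I / L) := by
  have hLC : (L : ℂ) ≠ 0 := Complex.ofReal_ne_zero.2 hL
  simp only [Complex.exp_eq_one_iff, ← mul_div_assoc, eq_div_iff hLC]

lemma mem_criticalN3_iff_exists_charRoots (hL : 0 < L) :
    L ∈ criticalN3 ↔ ∃ μ s t r, CharRoots μ s t r ∧ (s ≠ t ∧ s ≠ r ∧ t ≠ r) ∧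
      exp (s * L) = 1 ∧ exp (t * L) = 1 ∧ exp (r * L) = 1 := by
  have hLC : (L : ℂ) ≠ 0 := Complex.ofReal_ne_zero.2 hL.ne'
  set ω : ℂ := 2 * Real.pi * Complex.I / L with hω
  have hω0 : ω ≠ 0 := div_ne_zero Complex.two_pi_I_ne_zero hLC
  have hωL : ω ^ 2 * L ^ 2 = -(4 * Real.pi ^ 2) := by
    rw [hω, div_pow, div_mul_cancel₀ _ (pow_ne_zero 2 hLC)]
    linear_combination 4 * (Real.pi : ℂ) ^ 2 * Complex.I_sq
  have hsq_iff (m n p : ℤ) : L ^ 2 = -(4 * Real.pi ^ 2 * ((m : ℝ) * n + m * p + n * p)) ↔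
      m * ω * (n * ω) + m * ω * (p * ω) + n * ω * (p * ω) = 1 := by
    rw [← mul_left_inj' (pow_ne_zero 2 hLC), ← Complex.ofReal_inj]
    push_cast
    constructor <;> intro h
    · linear_combination ((m : ℂ) * n + m * p + n * p) * hωL - h
    · linear_combination ((m : ℂ) * n + m * p + n * p) * hωL - h
  have hsum_iff (m n p : ℤ) : m + n + p = 0 ↔ m * ω + n * ω + p * ω = 0 := by
    rw [← add_mul, ← add_mul, mul_eq_zero_iff_right hω0]
    norm_cast
  have hinj (m n : ℤ) : m ≠ n ↔ m * ω ≠ n * ω := by simp [hω0]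
  simp only [mem_criticalN3_iff_exists_ints hL.le, exp_mul_eq_one_iff hL.ne', ← hω, hsq_iff,
    hsum_iff, hinj]
  constructor
  · rintro ⟨m, n, p, hdistinct, hsum, hsq⟩
    exact ⟨-(m * ω * (n * ω) * (p * ω)), _, _, _, ⟨hsum, hsq, (neg_neg _).symm⟩, hdistinct,
      ⟨m, rfl⟩, ⟨n, rfl⟩, ⟨p, rfl⟩⟩
  · rintro ⟨μ, _, _, _, h, hdistinct, ⟨m, rfl⟩, ⟨n, rfl⟩, ⟨p, rfl⟩⟩
    exact ⟨m, n, p, hdistinct, h.sum_eq, h.sum_mul_eq⟩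

end Arithmetic

/-- The decoupled form of the overdetermined Boussinesq problem: the conditions satisfied by
`v = θ + u` and `w = θ - u`. -/
structure IsDecoupledMode (L : ℝ) (μ : ℂ) (v w : ℝ → ℂ) : Prop where
  mode_left : IsKdVMode L μ v
  mode_right : IsKdVMode L (-μ) w
  left_zero : v 0 = 0
  left_length : v L = 0
  right_zero : w 0 = 0
  right_length : w L = 0
  deriv_right_zero : deriv w 0 = -deriv v 0
  deriv_right_length : deriv w L = deriv v L
  deriv₂_right_zero : deriv (deriv w) 0 = -deriv (deriv v) 0
  deriv₂_right_length : deriv (deriv w) L = -deriv (deriv v) L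
  nontrivial : ¬∀ x ∈ Icc 0 L, v x = 0 ∧ w x = 0

namespace IsDecoupledMode

variable {L : ℝ} {μ : ℂ} {v w : ℝ → ℂ}

lemma deriv_sq_add_deriv_sq (hL : 0 ≤ L) (h : IsDecoupledMode L μ v w) :
    deriv v 0 ^ 2 + deriv v L ^ 2 = 0 := by
  have key := IsKdVMode.concomitant_eq hL h.mode_left h.mode_right
  simp only [concomitant, h.left_zero, h.left_length, h.right_zero, h.right_length,
    h.deriv_right_zero, h.deriv_right_length] at key
  linear_combination -key

lemma deriv_mul_deriv_deriv_length (hL : 0 ≤ L) (h : IsDecoupledMode L μ v w) :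
    deriv v L * deriv (deriv v) L = 0 := by
  have key := IsKdVMode.concomitantDeriv_eq hL h.mode_left h.mode_right
  simp only [concomitantDeriv, h.left_zero, h.left_length, h.deriv_right_zero,
    h.deriv_right_length, h.deriv₂_right_zero, h.deriv₂_right_length] at key
  linear_combination -key / 2

lemma deriv_deriv_sq_eq (hL : 0 ≤ L) (h : IsDecoupledMode L μ v w) :
    deriv (deriv v) L ^ 2 = deriv (deriv v) 0 ^ 2 := by
  have key := IsKdVMode.concomitantDeriv₂_eq hL h.mode_left h.mode_right
  simp only [concomitantDeriv₂, h.left_zero, h.left_length, h.right_zero,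
    h.right_length, h.deriv_right_zero, h.deriv_right_length, h.deriv₂_right_zero,
    h.deriv₂_right_length] at key
  linear_combination h.deriv_sq_add_deriv_sq hL - key

lemma deriv_length_eq_exp_mul (hL : 0 ≤ L) (h : IsDecoupledMode L μ v w) (hd : deriv v L ≠ 0)
    {z : ℂ} (hz : z ^ 3 + z + μ = 0) (hz0 : z ≠ 0) :
    deriv v L = exp (z * L) * deriv v 0 := by
  have hlength : deriv (deriv v) L = 0 :=
    (mul_eq_zero.1 (h.deriv_mul_deriv_deriv_length hL)).resolve_left hd
  have hzero : deriv (deriv v) 0 = 0 := by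
    rw [← sq_eq_zero_iff, ← h.deriv_deriv_sq_eq hL, hlength, zero_pow two_ne_zero]
  have key := h.mode_left.deriv_deriv_add_mul_deriv_eq hL h.left_zero h.left_length hz
  rw [hzero, hlength] at key
  exact mul_left_cancel₀ hz0 (by linear_combination key)

lemma deriv_length_eq_zero (hL : 0 ≤ L) (h : IsDecoupledMode L μ v w) : deriv v L = 0 := by
  by_contra hd
  have hexp {z : ℂ} (hz : z ^ 3 + z + μ = 0) (hz0 : z ≠ 0) :
      deriv v L = exp (z * L) * deriv v 0 := h.deriv_length_eq_exp_mul hL hd hz hz0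
  have hsq := h.deriv_sq_add_deriv_sq hL
  suffices hsq' : deriv v L ^ 2 = deriv v 0 ^ 2 by
    exact hd (pow_eq_zero_iff two_ne_zero |>.1 (by linear_combination (hsq + hsq') / 2))
  by_cases hμ : μ = 0
  · have hI : deriv v L = exp (Complex.I * L) * deriv v 0 :=
      hexp (by rw [hμ, Complex.I_pow_three]; ring) Complex.I_ne_zero
    have hnegI : deriv v L = exp (-Complex.I * L) * deriv v 0 :=
      hexp (by rw [hμ, neg_pow, Complex.I_pow_three]; ring) (neg_ne_zero.2 Complex.I_ne_zero)
    have hmul : exp (Complex.I * L) * exp (-Complex.I * L) = 1 := by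
      rw [← Complex.exp_add, ← add_mul, add_neg_cancel, zero_mul, Complex.exp_zero]
    calc deriv v L ^ 2 = exp (Complex.I * L) * deriv v 0 * (exp (-Complex.I * L) * deriv v 0) := by
          rw [← hI, ← hnegI, sq]
      _ = deriv v 0 ^ 2 := by linear_combination deriv v 0 ^ 2 * hmul
  · obtain ⟨s, t, r, hroots⟩ := exists_charRoots μ
    have hne : s * t * r ≠ 0 := by rwa [hroots.mul_eq, neg_ne_zero]
    have hcube : deriv v L ^ 3 = deriv v 0 ^ 3 := hroots.pow_three_eq
      (hexp hroots.eval_left (left_ne_zero_of_mul (left_ne_zero_of_mul hne)))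
      (hexp hroots.rotate.eval_left (right_ne_zero_of_mul (left_ne_zero_of_mul hne)))
      (hexp hroots.rotate.rotate.eval_left (right_ne_zero_of_mul hne))
    have hprod : deriv v L ^ 2 * (deriv v L + deriv v 0) = 0 := by
      linear_combination hcube + deriv v 0 * hsq
    have hneg : deriv v L = -deriv v 0 :=
      eq_neg_of_add_eq_zero_left ((mul_eq_zero.1 hprod).resolve_left (pow_ne_zero 2 hd))
    rw [hneg, neg_sq]

lemma deriv_zero_eq_zero (hL : 0 ≤ L) (h : IsDecoupledMode L μ v w) : deriv v 0 = 0 := by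
  have hsq := h.deriv_sq_add_deriv_sq hL
  rwa [h.deriv_length_eq_zero hL, zero_pow two_ne_zero, add_zero, sq_eq_zero_iff] at hsq

lemma deriv_deriv_length_eq_exp_mul (hL : 0 ≤ L) (h : IsDecoupledMode L μ v w) {z : ℂ}
    (hz : z ^ 3 + z + μ = 0) : deriv (deriv v) L = exp (z * L) * deriv (deriv v) 0 := by
  simpa only [h.deriv_length_eq_zero hL, h.deriv_zero_eq_zero hL, mul_zero, add_zero] using
    h.mode_left.deriv_deriv_add_mul_deriv_eq hL h.left_zero h.left_length hz

lemma deriv_deriv_length_eq (hL : 0 ≤ L) (h : IsDecoupledMode L μ v w) :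
    deriv (deriv v) L = deriv (deriv v) 0 := by
  have hsq := h.deriv_deriv_sq_eq hL
  obtain ⟨s, t, r, hroots⟩ := exists_charRoots μ
  have hcube := hroots.pow_three_eq (h.deriv_deriv_length_eq_exp_mul hL hroots.eval_left)
    (h.deriv_deriv_length_eq_exp_mul hL hroots.rotate.eval_left)
    (h.deriv_deriv_length_eq_exp_mul hL hroots.rotate.rotate.eval_left)
  rcases sq_eq_sq_iff_eq_or_eq_neg.1 hsq with heq | hneg
  · exact heq
  · have hzero : deriv (deriv v) 0 = 0 := by
      rw [hneg] at hcube
      exact pow_eq_zero_iff three_ne_zero |>.1 (by linear_combination -hcube / 2)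
    rw [hneg, hzero, neg_zero]

lemma deriv_deriv_zero_ne_zero (hL : 0 ≤ L) (h : IsDecoupledMode L μ v w) :
    deriv (deriv v) 0 ≠ 0 := by
  intro h₂
  have h₁ := h.deriv_zero_eq_zero hL
  have hv := h.mode_left.eqOn_zero h.left_zero h₁ h₂
  have hw := h.mode_right.eqOn_zero h.right_zero (by rw [h.deriv_right_zero, h₁, neg_zero])
    (by rw [h.deriv₂_right_zero, h₂, neg_zero])
  exact h.nontrivial fun x hx ↦ ⟨hv hx, hw hx⟩

lemma exp_mul_length_eq_one (hL : 0 ≤ L) (h : IsDecoupledMode L μ v w) {z : ℂ}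
    (hz : z ^ 3 + z + μ = 0) : exp (z * L) = 1 :=
  mul_right_cancel₀ (h.deriv_deriv_zero_ne_zero hL) <| by
    rw [← h.deriv_deriv_length_eq_exp_mul hL hz, h.deriv_deriv_length_eq hL, one_mul]

lemma not_double_root (hL : 0 < L) (h : IsDecoupledMode L μ v w) {z : ℂ}
    (hz : z ^ 3 + z + μ = 0) : 3 * z ^ 2 + 1 ≠ 0 := by
  intro hdouble
  have key := h.mode_left.deriv_eq_of_double_root hL.le h.left_zero h.left_length hz hdouble
  simp only [h.deriv_length_eq_zero hL.le, h.deriv_zero_eq_zero hL.le, mul_zero, add_zero,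
    h.deriv_deriv_length_eq hL.le] at key
  exact mul_ne_zero (Complex.ofReal_ne_zero.2 hL.ne') (h.deriv_deriv_zero_ne_zero hL.le) key.symm

lemma exists_charRoots_exp_eq_one (hL : 0 < L) (h : IsDecoupledMode L μ v w) :
    ∃ s t r, CharRoots μ s t r ∧ (s ≠ t ∧ s ≠ r ∧ t ≠ r) ∧
      exp (s * L) = 1 ∧ exp (t * L) = 1 ∧ exp (r * L) = 1 := by
  obtain ⟨s, t, r, hroots⟩ := exists_charRoots μ
  have hdistinct {x y z : ℂ} (hxyz : CharRoots μ x y z) : x ≠ y := fun hxy ↦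
    h.not_double_root hL hxyz.eval_left (hxyz.double_root hxy)
  have hexp {x y z : ℂ} (hxyz : CharRoots μ x y z) : exp (x * L) = 1 :=
    h.exp_mul_length_eq_one hL.le hxyz.eval_left
  exact ⟨s, t, r, hroots,
    ⟨hdistinct hroots, (hdistinct hroots.rotate.rotate).symm, hdistinct hroots.rotate⟩,
    hexp hroots, hexp hroots.rotate, hexp hroots.rotate.rotate⟩

end IsDecoupledMode

section Existence

variable {L : ℝ} {μ : ℂ}

lemma isDecoupledMode_sum_affineExp {ι : Type*} [Fintype ι] {c z : ι → ℂ} (hL : 0 < L)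
    (hroot : ∀ j, z j ^ 3 + z j + μ = 0) (hexp : ∀ j, exp (z j * L) = 1)
    (h₀ : ∑ j, c j = 0) (h₁ : ∑ j, z j * c j = 0) (h₂ : ∑ j, z j * (z j * c j) ≠ 0) :
    IsDecoupledMode L μ (∑ j, affineExp (c j) 0 (z j)) (∑ j, affineExp (-c j) 0 (-z j)) := by
  have hval {x : ℝ} (hx : ∀ j, exp (z j * x) = 1) (p : ι → ℂ) :
      ∑ j, affineExp (p j) 0 (z j) x = ∑ j, p j :=
    Finset.sum_congr rfl fun j _ ↦ affineExp_of_exp_eq_one (hx j)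
  have hval_neg {x : ℝ} (hx : ∀ j, exp (z j * x) = 1) (p : ι → ℂ) :
      ∑ j, affineExp (p j) 0 (-z j) x = ∑ j, p j :=
    Finset.sum_congr rfl fun j _ ↦ affineExp_of_exp_eq_one <| by
      rw [neg_mul, Complex.exp_neg, hx j, inv_one]
  have hexp₀ (j : ι) : exp (z j * (0 : ℝ)) = 1 := by simp
  have hv : IsKdVMode L μ (∑ j, affineExp (c j) 0 (z j)) :=
    isKdVMode_sum_affineExp hroot fun _ ↦ zero_mul _
  constructor
  case mode_left => exact hv
  case mode_right =>
    exact isKdVMode_sum_affineExp (fun j ↦ by linear_combination -hroot j) fun _ ↦ zero_mul _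
  case nontrivial =>
    intro h
    have hdv := eqOn_deriv_zero_of_eqOn_zero_Icc hL hv.differentiable fun x hx ↦ (h x hx).1
    have hd2v := eqOn_deriv_zero_of_eqOn_zero_Icc hL hv.differentiable_deriv hdv
      (left_mem_Icc.2 hL.le)
    simp only [deriv_sum_affineExp, Finset.sum_apply, mul_zero, add_zero, hval hexp₀] at hd2v
    exact h₂ hd2v
  all_goals
    simp only [deriv_sum_affineExp, Finset.sum_apply, mul_zero, add_zero, hval hexp₀, hval hexp,
      hval_neg hexp₀, hval_neg hexp, neg_mul, mul_neg, neg_neg,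
      Finset.sum_neg_distrib, h₀, h₁, neg_zero]

lemma exists_isDecoupledMode {s t r : ℂ} (hL : 0 < L) (h : CharRoots μ s t r)
    (hdistinct : s ≠ t ∧ s ≠ r ∧ t ≠ r)
    (hexp : exp (s * L) = 1 ∧ exp (t * L) = 1 ∧ exp (r * L) = 1) :
    ∃ v w, IsDecoupledMode L μ v w := by
  obtain ⟨hst, hsr, htr⟩ := hdistinct
  -- The coefficients are those of the second divided difference of `z ↦ e^{zx}` at the roots.
  refine ⟨_, _, isDecoupledMode_sum_affineExp (c := ![t - r, r - s, s - t]) (z := ![s, t, r]) hL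
    ?_ ?_ ?_ ?_ ?_⟩
  · simp [Fin.forall_fin_succ, h.eval_left, h.rotate.eval_left, h.rotate.rotate.eval_left]
  · simpa [Fin.forall_fin_succ] using hexp
  · simp [Fin.sum_univ_three]
  · simp only [Fin.sum_univ_three, Matrix.cons_val]
    ring
  · have hvandermonde : s * (s * (t - r)) + t * (t * (r - s)) + r * (r * (s - t))
        = (s - t) * (s - r) * (t - r) := by ring
    simpa [Fin.sum_univ_three, hvandermonde, sub_ne_zero, and_assoc] using ⟨hst, hsr, htr⟩

end Existence

/-- A nontrivial solution `(θ, u)` of the linearized Boussinesq eigenvalue system with its boundary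
conditions and the additional condition `θ″(0) = 0`. -/
structure IsBoussinesqMode (L : ℝ) (lam : ℂ) (θ u : ℝ → ℂ) : Prop where
  contDiff_θ : ContDiff ℝ 3 θ
  contDiff_u : ContDiff ℝ 3 u
  nontrivial : ¬∀ x ∈ Icc 0 L, θ x = 0 ∧ u x = 0
  ode_u : ∀ x ∈ Icc 0 L, -deriv u x - deriv (deriv (deriv u)) x = lam * θ x
  ode_θ : ∀ x ∈ Icc 0 L, -deriv θ x - deriv (deriv (deriv θ)) x = lam * u x
  θ_zero : θ 0 = 0
  θ_length : θ L = 0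
  deriv_θ_zero : deriv θ 0 = 0
  deriv₂_θ_length : deriv (deriv θ) L = 0
  u_zero : u 0 = 0
  u_length : u L = 0
  deriv_u_length : deriv u L = 0
  deriv₂_θ_zero : deriv (deriv θ) 0 = 0

lemma add_eq_zero_and_sub_eq_zero_iff {a b : ℂ} : a + b = 0 ∧ a - b = 0 ↔ a = 0 ∧ b = 0 := by
  constructor
  · rintro ⟨hadd, hsub⟩
    exact ⟨by linear_combination (hadd + hsub) / 2, by linear_combination (hadd - hsub) / 2⟩
  · rintro ⟨rfl, rfl⟩
    simp

section Decoupling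

variable {L : ℝ} {lam : ℂ}

lemma IsBoussinesqMode.decouple {θ u : ℝ → ℂ} (h : IsBoussinesqMode L lam θ u) :
    IsDecoupledMode L lam (θ + u) (θ - u) := by
  have hθ := h.contDiff_θ
  have hu := h.contDiff_u
  have hadd₁ := deriv_add_of_differentiable (hθ.differentiable three_ne_zero)
    (hu.differentiable three_ne_zero)
  have hsub₁ := deriv_sub_of_differentiable (hθ.differentiable three_ne_zero)
    (hu.differentiable three_ne_zero)
  have hadd₂ := deriv_deriv_add_of_contDiff_three hθ hu
  have hsub₂ := deriv_deriv_sub_of_contDiff_three hθ hu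
  constructor
  case mode_left =>
    refine ⟨hθ.add hu, fun x hx ↦ ?_⟩
    rw [deriv_deriv_deriv_add_of_contDiff_three hθ hu, hadd₁]
    simp only [Pi.add_apply]
    linear_combination -h.ode_u x hx - h.ode_θ x hx
  case mode_right =>
    refine ⟨hθ.sub hu, fun x hx ↦ ?_⟩
    rw [deriv_deriv_deriv_sub_of_contDiff_three hθ hu, hsub₁]
    simp only [Pi.sub_apply]
    linear_combination h.ode_u x hx - h.ode_θ x hx
  case nontrivial => simpa [add_eq_zero_and_sub_eq_zero_iff] using h.nontrivial
  all_goals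
    simp [↓hadd₂, ↓hsub₂, hadd₁, hsub₁, h.θ_zero, h.θ_length, h.deriv_θ_zero, h.deriv₂_θ_length,
      h.u_zero, h.u_length, h.deriv_u_length, h.deriv₂_θ_zero]

lemma IsDecoupledMode.recouple {v w : ℝ → ℂ} (h : IsDecoupledMode L lam v w) :
    IsBoussinesqMode L lam (v + w) (v - w) := by
  have hv := h.mode_left.contDiff
  have hw := h.mode_right.contDiff
  have hadd₁ := deriv_add_of_differentiable h.mode_left.differentiable h.mode_right.differentiable
  have hsub₁ := deriv_sub_of_differentiable h.mode_left.differentiable h.mode_right.differentiable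
  have hadd₂ := deriv_deriv_add_of_contDiff_three hv hw
  constructor
  case contDiff_θ => exact hv.add hw
  case contDiff_u => exact hv.sub hw
  case nontrivial => simpa [add_eq_zero_and_sub_eq_zero_iff] using h.nontrivial
  case ode_u =>
    intro x hx
    rw [deriv_deriv_deriv_sub_of_contDiff_three hv hw, hsub₁]
    simp only [Pi.add_apply, Pi.sub_apply]
    linear_combination h.mode_right.ode x hx - h.mode_left.ode x hx
  case ode_θ =>
    intro x hx
    rw [deriv_deriv_deriv_add_of_contDiff_three hv hw, hadd₁]
    simp only [Pi.add_apply, Pi.sub_apply]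
    linear_combination -h.mode_right.ode x hx - h.mode_left.ode x hx
  all_goals
    simp [↓hadd₂, hadd₁, hsub₁, h.left_zero, h.left_length, h.right_zero, h.right_length,
      h.deriv_right_zero, h.deriv_right_length, h.deriv₂_right_zero, h.deriv₂_right_length]

end Decoupling

theorem statement_8 (L : ℝ) (hL : 0 < L) :
    (∃ (lam : ℂ) (θ u : ℝ → ℂ),
      ContDiff ℝ 3 θ ∧ ContDiff ℝ 3 u ∧
      ¬(∀ x ∈ Icc (0 : ℝ) L, θ x = 0 ∧ u x = 0) ∧
      (∀ x ∈ Icc (0 : ℝ) L, -deriv u x - deriv (deriv (deriv u)) x = lam * θ x) ∧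
      (∀ x ∈ Icc (0 : ℝ) L, -deriv θ x - deriv (deriv (deriv θ)) x = lam * u x) ∧
      θ 0 = 0 ∧ θ L = 0 ∧ deriv θ 0 = 0 ∧ deriv (deriv θ) L = 0 ∧
      u 0 = 0 ∧ u L = 0 ∧ deriv u L = 0 ∧ deriv (deriv θ) 0 = 0) ↔ L ∈ criticalN3 := by
  rw [mem_criticalN3_iff_exists_charRoots hL]
  constructor
  · rintro ⟨lam, θ, u, hθ, hu, hne, ode_u, ode_θ, θ_zero, θ_length, dθ_zero, d2θ_length, u_zero,
      u_length, du_length, d2θ_zero⟩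
    have h : IsBoussinesqMode L lam θ u := ⟨hθ, hu, hne, ode_u, ode_θ, θ_zero, θ_length, dθ_zero,
      d2θ_length, u_zero, u_length, du_length, d2θ_zero⟩
    exact ⟨lam, h.decouple.exists_charRoots_exp_eq_one hL⟩
  · rintro ⟨lam, s, t, r, hroots, hdistinct, hexp⟩
    obtain ⟨v, w, hvw⟩ := exists_isDecoupledMode hL hroots hdistinct hexp
    have h := hvw.recouple
    exact ⟨lam, v + w, v - w, h.contDiff_θ, h.contDiff_u, h.nontrivial, h.ode_u, h.ode_θ, h.θ_zero,
      h.θ_length, h.deriv_θ_zero, h.deriv₂_θ_length, h.u_zero, h.u_length, h.deriv_u_length,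
      h.deriv₂_θ_zero⟩
end

section
/- Let L > 0. Then L ∈ 𝒩 if and only if there exist p ∈ ℂ and (α, β) ∈ ℂ² with (α, β) ≠ (0, 0) such that the function ξ ↦ (α − β·e^{−iLξ})/(ξ³ − ξ + p) is entire; that is, there exists an entire function F : ℂ → ℂ with F(ξ)·(ξ³ − ξ + p) = α − β·e^{−iLξ} for all ξ ∈ ℂ. -/
/-!
The quotient is entire exactly when every root of the cubic is, with multiplicity, a zero of
`α − β e^{−iLξ}`. This forces `β ≠ 0`, and then the zeros are all simple and form a coset of
`(2π/L)ℤ`, so the condition is that the roots `a`, `b`, `c` are distinct with `L(a − b) = 2πm` and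
`L(b − c) = 2πn` for integers `m`, `n`. Since the roots have sum `0`, that the coefficient of `ξ` is
`−1` amounts to `(a − b)² + (a − b)(b − c) + (b − c)² = 3`, that is `3L² = 4π²(m² + mn + n²)`.
Finally the signs of `m`, `n` do not matter: two of the nonzero integers `m`, `n`, `−(m + n)` have
the same sign, and the quadratic form takes the same value on any two of the three.
-/

open Complex

section ZerosOfFunctions

variable {𝕜 E : Type*} [NormedAddCommGroup E]

theorem deriv_sub_sq_smul_eq_zero [NontriviallyNormedField 𝕜] [NormedSpace 𝕜 E] {F : 𝕜 → E}
    {a : 𝕜} (hF : DifferentiableAt 𝕜 F a) : deriv (fun z ↦ (z - a) ^ 2 • F z) a = 0 := by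
  have hsq : HasDerivAt (fun z ↦ (z - a) ^ 2) 0 a := by
    simpa using ((hasDerivAt_id a).sub_const a).fun_pow 2
  simpa using (hsq.fun_smul hF.hasDerivAt).deriv

theorem nodup_of_forall_deriv_prod_sub_smul_ne_zero [NontriviallyNormedField 𝕜] [NormedSpace 𝕜 E]
    {F : 𝕜 → E} (hF : Differentiable 𝕜 F) {s : Multiset 𝕜}
    (hs : ∀ a ∈ s, deriv (fun z ↦ (s.map (z - ·)).prod • F z) a ≠ 0) : s.Nodup := by
  rw [Multiset.nodup_iff_ne_cons_cons]
  rintro a t rfl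
  classical
  refine hs a (Multiset.mem_cons_self _ _) ?_
  have hprod : DifferentiableAt 𝕜 (fun z ↦ (t.map (z - ·)).prod) a :=
    (HasFDerivAt.multiset_prod fun b _ ↦ (hasFDerivAt_id a).sub_const b).differentiableAt
  simpa only [Multiset.map_cons, Multiset.prod_cons, ← mul_assoc, ← sq, mul_smul] using
    deriv_sub_sq_smul_eq_zero (hprod.fun_smul (hF a))

variable [NormedSpace ℂ E] [CompleteSpace E] {f : ℂ → E}

theorem exists_differentiable_sub_smul_eq (hf : Differentiable ℂ f) {a : ℂ} (ha : f a = 0) :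
    ∃ g : ℂ → E, Differentiable ℂ g ∧ ∀ z, (z - a) • g z = f z := by
  refine ⟨dslope f a, ?_, fun z ↦ by rw [sub_smul_dslope, ha, sub_zero]⟩
  rw [← differentiableOn_univ] at hf ⊢
  exact (Complex.differentiableOn_dslope Filter.univ_mem).2 hf

theorem exists_differentiable_prod_sub_smul_eq (hf : Differentiable ℂ f) {s : Multiset ℂ}
    (hs : s.Nodup) (hfs : ∀ a ∈ s, f a = 0) :
    ∃ F : ℂ → E, Differentiable ℂ F ∧ ∀ z, (s.map (z - ·)).prod • F z = f z := by
  induction s using Multiset.induction generalizing f with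
  | empty => exact ⟨f, hf, by simp⟩
  | cons a s ih =>
    obtain ⟨has, hs⟩ := Multiset.nodup_cons.1 hs
    obtain ⟨g, hg, hgf⟩ :=
      exists_differentiable_sub_smul_eq hf (hfs a (Multiset.mem_cons_self a s))
    have hgs : ∀ b ∈ s, g b = 0 := fun b hb ↦ by
      have hgb : (b - a) • g b = 0 := (hgf b).trans (hfs b (Multiset.mem_cons_of_mem hb))
      exact (smul_eq_zero.1 hgb).resolve_left (sub_ne_zero.2 (ne_of_mem_of_not_mem hb has))
    obtain ⟨F, hF, hFg⟩ := ih hg hs hgs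
    exact ⟨F, hF, fun z ↦ by rw [Multiset.map_cons, Multiset.prod_cons, mul_smul, hFg, hgf]⟩

end ZerosOfFunctions

section Exponential

variable {L : ℂ}

theorem exp_neg_I_mul_eq_iff {x y : ℂ} :
    exp (-(I * L * x)) = exp (-(I * L * y)) ↔ ∃ n : ℤ, L * (y - x) = 2 * Real.pi * n := by
  rw [exp_eq_exp_iff_exists_int]
  refine exists_congr fun n ↦ ⟨fun h ↦ mul_left_cancel₀ I_ne_zero ?_, fun h ↦ ?_⟩
  · linear_combination h
  · linear_combination I * h

theorem deriv_sub_mul_exp_neg_I_mul_ne_zero (hL : L ≠ 0) (α : ℂ) {β : ℂ} (hβ : β ≠ 0) (ξ : ℂ) :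
    deriv (fun ξ ↦ α - β * exp (-(I * L * ξ))) ξ ≠ 0 := by
  have h : HasDerivAt (fun ξ ↦ α - β * exp (-(I * L * ξ)))
      (-(β * (exp (-(I * L * ξ)) * -(I * L * 1)))) ξ :=
    ((((hasDerivAt_id ξ).const_mul (I * L)).neg.cexp).const_mul β).const_sub α
  rw [h.deriv]
  simp [hβ, hL]

theorem exists_sub_mul_exp_eq_entire_mul_prod_sub_iff (hL : L ≠ 0) {s : Multiset ℂ} {a : ℂ}
    (ha : a ∈ s) :
    (∃ α β : ℂ, (α, β) ≠ (0, 0) ∧ ∃ F : ℂ → ℂ, Differentiable ℂ F ∧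
      ∀ ξ, F ξ * (s.map (ξ - ·)).prod = α - β * exp (-(I * L * ξ))) ↔
    s.Nodup ∧ ∀ x ∈ s, ∃ n : ℤ, L * (x - a) = 2 * Real.pi * n := by
  constructor
  · rintro ⟨α, β, hαβ, F, hF, h⟩
    have hzero : ∀ x ∈ s, α = β * exp (-(I * L * x)) := fun x hx ↦ by
      have hx' : (s.map (x - ·)).prod = 0 :=
        Multiset.prod_eq_zero (Multiset.mem_map.2 ⟨x, hx, sub_self x⟩)
      rw [← sub_eq_zero, ← h, hx', mul_zero]
    have hβ : β ≠ 0 := by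
      rintro rfl
      exact hαβ (by simp [hzero a ha])
    refine ⟨nodup_of_forall_deriv_prod_sub_smul_ne_zero hF fun x _ ↦ ?_, fun x hx ↦ ?_⟩
    · simpa only [smul_eq_mul, mul_comm _ (F _), h] using
        deriv_sub_mul_exp_neg_I_mul_ne_zero hL α hβ x
    · exact exp_neg_I_mul_eq_iff.1 (mul_left_cancel₀ hβ ((hzero a ha).symm.trans (hzero x hx)))
  · rintro ⟨hnodup, hdiff⟩
    obtain ⟨F, hF, h⟩ := exists_differentiable_prod_sub_smul_eq
      (f := fun ξ ↦ exp (-(I * L * a)) - exp (-(I * L * ξ))) (by fun_prop) hnodup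
      fun x hx ↦ sub_eq_zero.2 (exp_neg_I_mul_eq_iff.2 (hdiff x hx))
    refine ⟨exp (-(I * L * a)), 1, by simp, F, hF, fun ξ ↦ ?_⟩
    rw [mul_comm, one_mul, ← smul_eq_mul, h]

theorem nodup_and_forall_exists_int_mul_sub_eq_iff (hL : L ≠ 0) {a b c : ℂ} :
    (({a, b, c} : Multiset ℂ).Nodup ∧
      ∀ x ∈ ({a, b, c} : Multiset ℂ), ∃ n : ℤ, L * (x - b) = 2 * Real.pi * n) ↔
    ∃ m n : ℤ, m ≠ 0 ∧ n ≠ 0 ∧ m + n ≠ 0 ∧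
      L * (a - b) = 2 * Real.pi * m ∧ L * (b - c) = 2 * Real.pi * n := by
  have eq_iff {x y : ℂ} {n : ℤ} (h : L * (x - y) = 2 * Real.pi * n) : x = y ↔ n = 0 := by
    rw [← sub_eq_zero, ← mul_eq_zero_iff_left hL, h]
    simp [Real.pi_ne_zero]
  have sub_eq_add {m n : ℤ} (hm : L * (a - b) = 2 * Real.pi * m)
      (hn : L * (b - c) = 2 * Real.pi * n) :
      L * (a - c) = 2 * Real.pi * ↑(m + n) := by
    push_cast
    linear_combination hm + hn
  simp only [Multiset.insert_eq_cons, Multiset.nodup_cons, Multiset.nodup_singleton,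
    Multiset.mem_cons, Multiset.mem_singleton, not_or, and_true, forall_eq_or_imp, forall_eq]
  constructor
  · rintro ⟨⟨⟨hab, hac⟩, hbc⟩, ⟨m, hm⟩, -, n, hn⟩
    have hn' : L * (b - c) = 2 * Real.pi * ↑(-n) := by
      push_cast
      linear_combination -hn
    exact ⟨m, -n, mt (eq_iff hm).2 hab, mt (eq_iff hn').2 hbc,
      mt (eq_iff (sub_eq_add hm hn')).2 hac, hm, hn'⟩
  · rintro ⟨m, n, hm0, hn0, hmn0, hm, hn⟩
    refine ⟨⟨⟨mt (eq_iff hm).1 hm0, mt (eq_iff (sub_eq_add hm hn)).1 hmn0⟩, mt (eq_iff hn).1 hn0⟩,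
      ⟨m, hm⟩, ⟨0, by simp⟩, -n, ?_⟩
    push_cast
    linear_combination -hn

theorem exists_sub_mul_exp_eq_entire_mul_cubic_iff (hL : L ≠ 0) {a b c : ℂ} :
    (∃ α β : ℂ, (α, β) ≠ (0, 0) ∧ ∃ F : ℂ → ℂ, Differentiable ℂ F ∧
      ∀ ξ, F ξ * ((ξ - a) * (ξ - b) * (ξ - c)) = α - β * exp (-(I * L * ξ))) ↔
    ∃ m n : ℤ, m ≠ 0 ∧ n ≠ 0 ∧ m + n ≠ 0 ∧
      L * (a - b) = 2 * Real.pi * m ∧ L * (b - c) = 2 * Real.pi * n := by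
  have hquot := exists_sub_mul_exp_eq_entire_mul_prod_sub_iff hL (s := {a, b, c}) (a := b) (by simp)
  simp only [Multiset.insert_eq_cons, Multiset.map_cons, Multiset.prod_cons,
    Multiset.map_singleton, Multiset.prod_singleton, ← mul_assoc (_ - a)] at hquot
  rw [hquot, ← Multiset.insert_eq_cons, ← Multiset.insert_eq_cons,
    nodup_and_forall_exists_int_mul_sub_eq_iff hL]

end Exponential

section DepressedCubic

variable {K : Type*} [Field K]

theorem exists_depressed_cubic_eq_prod_sub [IsAlgClosed K] (q p : K) :
    ∃ a b c : K, a + b + c = 0 ∧ a * b + b * c + a * c = q ∧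
      ∀ ξ, ξ ^ 3 + q * ξ + p = (ξ - a) * (ξ - b) * (ξ - c) := by
  let P : Cubic K := ⟨1, 0, q, p⟩
  have hP : P.a ≠ 0 := one_ne_zero
  obtain ⟨a, b, c, h⟩ := (Cubic.splits_iff_roots_eq_three hP).1
    (IsAlgClosed.splits (P.toPoly.map (RingHom.id K)))
  have hsum := Cubic.b_eq_three_roots hP h
  have hprod := Cubic.c_eq_three_roots hP h
  have hd := Cubic.d_eq_three_roots hP h
  simp only [RingHom.id_apply, P] at hsum hprod hd
  exact ⟨a, b, c, by linear_combination hsum, by linear_combination -hprod,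
    fun ξ ↦ by linear_combination ξ ^ 2 * hsum + ξ * hprod + hd⟩

theorem exists_sub_eq_of_sq_add_mul_add_sq_eq (h3 : (3 : K) ≠ 0) {u v q : K}
    (h : u ^ 2 + u * v + v ^ 2 = -3 * q) :
    ∃ a b c : K, a + b + c = 0 ∧ a * b + b * c + a * c = q ∧ a - b = u ∧ b - c = v := by
  refine ⟨(2 * u + v) / 3, (v - u) / 3, -(u + 2 * v) / 3, ?_, ?_, ?_, ?_⟩
  · ring
  · field_simp
    linear_combination -3 * h
  · field_simp
    ring
  · field_simp
    ring

theorem sub_sq_add_mul_add_sub_sq_eq {R : Type*} [CommRing R] {a b c q : R}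
    (hsum : a + b + c = 0) (hprod : a * b + b * c + a * c = q) :
    (a - b) ^ 2 + (a - b) * (b - c) + (b - c) ^ 2 = -3 * q := by
  linear_combination (a + b + c) * hsum - 3 * hprod

end DepressedCubic

theorem exists_pos_nat_sq_add_mul_add_sq_eq_of_mul_pos {m n : ℤ} (h : 0 < m * n) :
    ∃ k l : ℕ, 0 < k ∧ 0 < l ∧ (k ^ 2 + k * l + l ^ 2 : ℤ) = m ^ 2 + m * n + n ^ 2 := by
  refine ⟨m.natAbs, n.natAbs, Int.natAbs_pos.2 (left_ne_zero_of_mul h.ne'),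
    Int.natAbs_pos.2 (right_ne_zero_of_mul h.ne'), ?_⟩
  rw [Int.natCast_natAbs, Int.natCast_natAbs, sq_abs, sq_abs, ← abs_mul, abs_of_pos h]

theorem exists_pos_nat_sq_add_mul_add_sq_eq {m n : ℤ} (hm : m ≠ 0) (hn : n ≠ 0)
    (hmn : m + n ≠ 0) :
    ∃ k l : ℕ, 0 < k ∧ 0 < l ∧ (k ^ 2 + k * l + l ^ 2 : ℤ) = m ^ 2 + m * n + n ^ 2 := by
  have hsign : 0 < m * n ∨ 0 < n * -(m + n) ∨ 0 < m * -(m + n) := by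
    simp only [mul_pos_iff]
    omega
  rcases hsign with h | h | h
  · exact exists_pos_nat_sq_add_mul_add_sq_eq_of_mul_pos h
  · have hform : m ^ 2 + m * n + n ^ 2 = n ^ 2 + n * -(m + n) + (-(m + n)) ^ 2 := by ring
    exact hform ▸ exists_pos_nat_sq_add_mul_add_sq_eq_of_mul_pos h
  · have hform : m ^ 2 + m * n + n ^ 2 = m ^ 2 + m * -(m + n) + (-(m + n)) ^ 2 := by ring
    exact hform ▸ exists_pos_nat_sq_add_mul_add_sq_eq_of_mul_pos h

theorem mem_criticalN_iff {L : ℝ} (hL : 0 ≤ L) :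
    L ∈ criticalN ↔ ∃ k l : ℕ, 0 < k ∧ 0 < l ∧
      3 * (L : ℂ) ^ 2 = 4 * Real.pi ^ 2 * (k ^ 2 + k * l + l ^ 2) := by
  refine exists₂_congr fun k l ↦ and_congr_right fun _ ↦ and_congr_right fun _ ↦ ?_
  rw [← sq_eq_sq₀ hL (by positivity), mul_pow, div_pow, Real.sq_sqrt (by positivity),
    Real.sq_sqrt (by positivity)]
  norm_cast
  push_cast
  constructor <;> intro h
  · linear_combination 3 * h
  · linear_combination h / 3

theorem statement_11_general {L : ℂ} (hL : L ≠ 0) :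
    (∃ k l : ℕ, 0 < k ∧ 0 < l ∧ 3 * L ^ 2 = 4 * Real.pi ^ 2 * (k ^ 2 + k * l + l ^ 2)) ↔
      ∃ (p α β : ℂ), (α, β) ≠ (0, 0) ∧
        ∃ F : ℂ → ℂ, Differentiable ℂ F ∧
          ∀ ξ : ℂ, F ξ * (ξ^3 - ξ + p) = α - β * exp (-(I * L * ξ)) := by
  constructor
  · rintro ⟨k, l, hk, hl, hkl⟩
    have hform : (2 * Real.pi * k / L) ^ 2 + 2 * Real.pi * k / L * (2 * Real.pi * l / L) +
        (2 * Real.pi * l / L) ^ 2 = -3 * -1 := by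
      field_simp
      linear_combination -hkl
    obtain ⟨a, b, c, hsum, hprod, hab, hbc⟩ :=
      exists_sub_eq_of_sq_add_mul_add_sq_eq three_ne_zero hform
    have hcubic (ξ : ℂ) : ξ ^ 3 - ξ + -(a * b * c) = (ξ - a) * (ξ - b) * (ξ - c) := by
      linear_combination ξ ^ 2 * hsum - ξ * hprod
    refine ⟨-(a * b * c), ?_⟩
    simp only [hcubic]
    refine (exists_sub_mul_exp_eq_entire_mul_cubic_iff hL).2
      ⟨k, l, by omega, by omega, by omega, ?_, ?_⟩
    · rw [hab, mul_div_cancel₀ _ hL, Int.cast_natCast]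
    · rw [hbc, mul_div_cancel₀ _ hL, Int.cast_natCast]
  · rintro ⟨p, h⟩
    obtain ⟨a, b, c, hsum, hprod, hcubic⟩ := exists_depressed_cubic_eq_prod_sub (-1) p
    simp only [neg_one_mul, ← sub_eq_add_neg] at hcubic
    simp only [hcubic] at h
    obtain ⟨m, n, hm, hn, hmn, hab, hbc⟩ := (exists_sub_mul_exp_eq_entire_mul_cubic_iff hL).1 h
    obtain ⟨k, l, hk, hl, hkl⟩ := exists_pos_nat_sq_add_mul_add_sq_eq hm hn hmn
    have hkl' : (k ^ 2 + k * l + l ^ 2 : ℂ) = m ^ 2 + m * n + n ^ 2 := by exact_mod_cast hkl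
    refine ⟨k, l, hk, hl, ?_⟩
    calc
      3 * L ^ 2 = L ^ 2 * ((a - b) ^ 2 + (a - b) * (b - c) + (b - c) ^ 2) := by
        rw [sub_sq_add_mul_add_sub_sq_eq hsum hprod]; ring
      _ = (L * (a - b)) ^ 2 + L * (a - b) * (L * (b - c)) + (L * (b - c)) ^ 2 := by ring
      _ = 4 * Real.pi ^ 2 * (k ^ 2 + k * l + l ^ 2) := by rw [hab, hbc, hkl']; ring

/-- `L ∈ 𝒩` iff there are `p ∈ ℂ` and `(α, β) ≠ (0,0)` such that
`ξ ↦ (α − β e^{−iLξ})/(ξ³ − ξ + p)` is entire, i.e. there is an entire `F` with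
`F(ξ)·(ξ³ − ξ + p) = α − β e^{−iLξ}` for all `ξ`. -/
theorem statement_11 (L : ℝ) (hL : 0 < L) :
    L ∈ criticalN ↔
      ∃ (p α β : ℂ), (α, β) ≠ (0, 0) ∧
        ∃ F : ℂ → ℂ, Differentiable ℂ F ∧
          ∀ ξ : ℂ, F ξ * (ξ^3 - ξ + p) = α - β * Complex.exp (-(Complex.I * (L : ℂ) * ξ)) :=
  (mem_criticalN_iff hL.le).trans (statement_11_general (ofReal_ne_zero.2 hL.ne'))
end

section
/- Let L > 0, T > 0, and let (η, v) be a classical solution of the homogeneous linearized KdV–KdV system on [0,T] × [0,L]. Then (3/2)·∫₀^T ∫₀^L (η_x² + v_x²) dx dt − (1/2)·∫₀^T ∫₀^L (η² + v²) dx dt + ∫₀^L x·η(T,x)·v(T,x) dx − ∫₀^L x·η(0,x)·v(0,x) dx − (L/2)·∫₀^T η_x(t,L)² dt = 0. -/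
open Set MeasureTheory

/-- Partial derivative in the first (time) variable. -/
noncomputable def pt (f : ℝ → ℝ → ℝ) : ℝ → ℝ → ℝ := fun t x => deriv (fun s => f s x) t

/-- Partial derivative in the second (space) variable. -/
noncomputable def px (f : ℝ → ℝ → ℝ) : ℝ → ℝ → ℝ := fun t x => deriv (fun y => f t y) x

/-- `(η, v)` is a classical solution of the homogeneous linearized KdV–KdV system on
`[0,T] × [0,L]`: the time derivatives and the spatial derivatives up to order `3` exist and are
continuous on `[0,T] × [0,L]`, the equations `η_t + v_x + v_{xxx} = 0`,
`v_t + η_x + η_{xxx} = 0` hold, and the boundary conditions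
`η(t,0) = η(t,L) = η_x(t,0) = 0`, `v(t,0) = v(t,L) = v_x(t,L) = 0` hold. -/
def IsClassicalSolution (L T : ℝ) (η v : ℝ → ℝ → ℝ) : Prop :=
  (∀ x, Differentiable ℝ fun t => η t x) ∧
  (∀ x, Differentiable ℝ fun t => v t x) ∧
  (∀ t, ContDiff ℝ 3 (η t)) ∧
  (∀ t, ContDiff ℝ 3 (v t)) ∧
  ContinuousOn (fun q : ℝ × ℝ => η q.1 q.2) (Icc 0 T ×ˢ Icc 0 L) ∧
  ContinuousOn (fun q : ℝ × ℝ => v q.1 q.2) (Icc 0 T ×ˢ Icc 0 L) ∧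
  ContinuousOn (fun q : ℝ × ℝ => pt η q.1 q.2) (Icc 0 T ×ˢ Icc 0 L) ∧
  ContinuousOn (fun q : ℝ × ℝ => pt v q.1 q.2) (Icc 0 T ×ˢ Icc 0 L) ∧
  ContinuousOn (fun q : ℝ × ℝ => px η q.1 q.2) (Icc 0 T ×ˢ Icc 0 L) ∧
  ContinuousOn (fun q : ℝ × ℝ => px v q.1 q.2) (Icc 0 T ×ˢ Icc 0 L) ∧
  ContinuousOn (fun q : ℝ × ℝ => px (px η) q.1 q.2) (Icc 0 T ×ˢ Icc 0 L) ∧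
  ContinuousOn (fun q : ℝ × ℝ => px (px v) q.1 q.2) (Icc 0 T ×ˢ Icc 0 L) ∧
  ContinuousOn (fun q : ℝ × ℝ => px (px (px η)) q.1 q.2) (Icc 0 T ×ˢ Icc 0 L) ∧
  ContinuousOn (fun q : ℝ × ℝ => px (px (px v)) q.1 q.2) (Icc 0 T ×ˢ Icc 0 L) ∧
  (∀ t ∈ Icc (0 : ℝ) T, ∀ x ∈ Icc (0 : ℝ) L,
    pt η t x + px v t x + px (px (px v)) t x = 0) ∧
  (∀ t ∈ Icc (0 : ℝ) T, ∀ x ∈ Icc (0 : ℝ) L,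
    pt v t x + px η t x + px (px (px η)) t x = 0) ∧
  (∀ t ∈ Icc (0 : ℝ) T, η t 0 = 0 ∧ η t L = 0 ∧ px η t 0 = 0) ∧
  (∀ t ∈ Icc (0 : ℝ) T, v t 0 = 0 ∧ v t L = 0 ∧ px v t L = 0)

/-!
Multiply the first equation by `x v`, the second by `x η`, and add. The time derivatives combine to
`∂ₜ (x η v)`, while the remaining terms decouple into `x η (η_x + η_{xxx})` and
`x v (v_x + v_{xxx})`. Since
`∂ₓ (x (f² / 2 + f f_{xx} - f_x² / 2) - f f_x) = x f (f_x + f_{xxx}) + f² / 2 - (3 / 2) f_x²`,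
the result is a balance law `∂ₜ P + ∂ₓ Q = R` with density `P = x η v` and source
`R = (η² + v²) / 2 - (3 / 2) (η_x² + v_x²)`. Integrate it over the rectangle: the Dirichlet
conditions leave of the flux `Q` only the term `-(L / 2) (η_x² + v_x²)` at `x = L`, where `v_x`
vanishes for a classical solution.
-/

open Function
open scoped Interval

section BalanceLaw

variable {E : Type*} [NormedAddCommGroup E] {a b c d : ℝ}

theorem integrableOn_uIoc_prod_of_continuousOn {f : ℝ → ℝ → E}
    (hf : ContinuousOn (uncurry f) ([[a, b]] ×ˢ [[c, d]])) :
    IntegrableOn (uncurry f) (uIoc a b ×ˢ uIoc c d) :=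
  (hf.integrableOn_compact (isCompact_uIcc.prod isCompact_uIcc)).mono_set
    (prod_mono uIoc_subset_uIcc uIoc_subset_uIcc)

variable [NormedSpace ℝ E]

theorem integral_eq_sub_of_hasDerivWithinAt_uIcc [CompleteSpace E] {f f' : ℝ → E}
    (hderiv : ∀ x ∈ [[a, b]], HasDerivWithinAt f (f' x) [[a, b]] x)
    (hint : IntervalIntegrable f' volume a b) : ∫ x in a..b, f' x = f b - f a :=
  intervalIntegral.integral_eq_sub_of_hasDeriv_right
    (fun x hx => (hderiv x hx).continuousWithinAt)
    (fun x hx => ((hderiv x (Ioo_subset_Icc_self hx)).hasDerivAt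
      (Icc_mem_nhds hx.1 hx.2)).hasDerivWithinAt)
    hint

theorem intervalIntegrable_intervalIntegral_of_integrableOn {f : ℝ → ℝ → E}
    (hf : IntegrableOn (uncurry f) (uIoc a b ×ˢ uIoc c d)) :
    IntervalIntegrable (fun t => ∫ x in c..d, f t x) volume a b := by
  rw [IntegrableOn, Measure.volume_eq_prod, ← Measure.prod_restrict] at hf
  simp only [intervalIntegrable_iff, intervalIntegral.intervalIntegral_eq_integral_uIoc]
  exact hf.integral_prod_left.smul _

theorem intervalIntegral_intervalIntegral_sub {f g : ℝ → ℝ → E}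
    (hf : ContinuousOn (uncurry f) ([[a, b]] ×ˢ [[c, d]]))
    (hg : ContinuousOn (uncurry g) ([[a, b]] ×ˢ [[c, d]])) :
    ∫ t in a..b, ∫ x in c..d, (f t x - g t x) =
      (∫ t in a..b, ∫ x in c..d, f t x) - ∫ t in a..b, ∫ x in c..d, g t x := by
  rw [← intervalIntegral.integral_sub
    (intervalIntegrable_intervalIntegral_of_integrableOn
      (integrableOn_uIoc_prod_of_continuousOn hf))
    (intervalIntegrable_intervalIntegral_of_integrableOn
      (integrableOn_uIoc_prod_of_continuousOn hg))]
  exact intervalIntegral.integral_congr fun t ht => intervalIntegral.integral_sub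
    (hf.uncurry_left t ht).intervalIntegrable (hg.uncurry_left t ht).intervalIntegrable

theorem integral_balance_law [CompleteSpace E] {P P' Q R : ℝ → ℝ → E}
    (hP : ∀ t ∈ [[a, b]], ∀ x ∈ [[c, d]], HasDerivWithinAt (P · x) (P' t x) [[a, b]] t)
    (hQ : ∀ t ∈ [[a, b]], ∀ x ∈ [[c, d]], HasDerivWithinAt (Q t) (R t x - P' t x) [[c, d]] x)
    (hP' : ContinuousOn (uncurry P') ([[a, b]] ×ˢ [[c, d]]))
    (hR : ContinuousOn (uncurry R) ([[a, b]] ×ˢ [[c, d]])) :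
    (∫ x in c..d, (P b x - P a x)) + ∫ t in a..b, (Q t d - Q t c) =
      ∫ t in a..b, ∫ x in c..d, R t x := by
  have hdensity : ∫ x in c..d, (P b x - P a x) = ∫ t in a..b, ∫ x in c..d, P' t x := by
    rw [intervalIntegral_intervalIntegral_swap (integrableOn_uIoc_prod_of_continuousOn hP')]
    exact intervalIntegral.integral_congr fun x hx =>
      (integral_eq_sub_of_hasDerivWithinAt_uIcc (fun t ht => hP t ht x hx)
        (hP'.uncurry_right x hx).intervalIntegrable).symm
  have hflux : ∫ t in a..b, (Q t d - Q t c) =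
      ∫ t in a..b, ∫ x in c..d, (R t x - P' t x) :=
    intervalIntegral.integral_congr fun t ht =>
      (integral_eq_sub_of_hasDerivWithinAt_uIcc (hQ t ht)
        ((hR.uncurry_left t ht).sub (hP'.uncurry_left t ht)).intervalIntegrable).symm
  rw [hdensity, hflux, intervalIntegral_intervalIntegral_sub hR hP', add_sub_cancel]

end BalanceLaw

/-- The flux `x (f² / 2 + f f_{xx} - f_x² / 2) - f f_x` produced by testing `f_x + f_{xxx}` with the
Morawetz multiplier `x f`. The derivatives `fx` and `fxx` are passed as data, so that one-sided
derivatives can be used at the end points of an interval. -/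
noncomputable def morawetzFlux (f fx fxx : ℝ → ℝ) (x : ℝ) : ℝ :=
  x * (f x ^ 2 / 2 + f x * fxx x - fx x ^ 2 / 2) - f x * fx x

theorem morawetzFlux_of_eq_zero {f : ℝ → ℝ} (fx fxx : ℝ → ℝ) {x : ℝ} (hf : f x = 0) :
    morawetzFlux f fx fxx x = -(x / 2) * fx x ^ 2 := by
  rw [morawetzFlux, hf]
  ring

theorem hasDerivWithinAt_morawetzFlux {f fx fxx : ℝ → ℝ} {fxxx x : ℝ} {s : Set ℝ}
    (hf : HasDerivWithinAt f (fx x) s x) (hfx : HasDerivWithinAt fx (fxx x) s x)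
    (hfxx : HasDerivWithinAt fxx fxxx s x) :
    HasDerivWithinAt (morawetzFlux f fx fxx)
      (x * (f x * (fx x + fxxx)) + f x ^ 2 / 2 - 3 / 2 * fx x ^ 2) s x := by
  refine (((hasDerivWithinAt_id x s).mul ((((hf.pow 2).div_const 2).add (hf.mul hfxx)).sub
    ((hfx.pow 2).div_const 2))).sub (hf.mul hfx)).congr_deriv ?_
  simp only [id_eq, Pi.add_apply, Pi.sub_apply, Pi.mul_apply, Pi.pow_apply]
  ring

/-- `f` has the partial derivatives `ft = ∂ₜ f`, `fx = ∂ₓ f`, `fxx = ∂ₓ² f` and `fxxx = ∂ₓ³ f` on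
the rectangle `I ×ˢ J`, with `f`, `ft` and `fx` jointly continuous. Derivatives are taken within
`I` and `J`, so that `f` need not be differentiable, or even meaningful, off the rectangle. -/
structure HasPartialDerivsOn (f ft fx fxx fxxx : ℝ → ℝ → ℝ) (I J : Set ℝ) : Prop where
  hasDerivWithinAt_t : ∀ t ∈ I, ∀ x ∈ J, HasDerivWithinAt (f · x) (ft t x) I t
  hasDerivWithinAt_x : ∀ t ∈ I, ∀ x ∈ J, HasDerivWithinAt (f t) (fx t x) J x
  hasDerivWithinAt_xx : ∀ t ∈ I, ∀ x ∈ J, HasDerivWithinAt (fx t) (fxx t x) J x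
  hasDerivWithinAt_xxx : ∀ t ∈ I, ∀ x ∈ J, HasDerivWithinAt (fxx t) (fxxx t x) J x
  continuousOn : ContinuousOn (uncurry f) (I ×ˢ J)
  continuousOn_t : ContinuousOn (uncurry ft) (I ×ˢ J)
  continuousOn_x : ContinuousOn (uncurry fx) (I ×ˢ J)

section Morawetz

variable {η ηt ηx ηxx ηxxx v vt vx vxx vxxx : ℝ → ℝ → ℝ}

theorem hasDerivWithinAt_morawetzFlux_add {I J : Set ℝ} {t x : ℝ} (ht : t ∈ I) (hx : x ∈ J)
    (hη : HasPartialDerivsOn η ηt ηx ηxx ηxxx I J) (hv : HasPartialDerivsOn v vt vx vxx vxxx I J)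
    (heqη : ηt t x + vx t x + vxxx t x = 0) (heqv : vt t x + ηx t x + ηxxx t x = 0) :
    HasDerivWithinAt
      (fun y => morawetzFlux (η t) (ηx t) (ηxx t) y + morawetzFlux (v t) (vx t) (vxx t) y)
      (1 / 2 * (η t x ^ 2 + v t x ^ 2) - 3 / 2 * (ηx t x ^ 2 + vx t x ^ 2)
        - x * (ηt t x * v t x + η t x * vt t x)) J x := by
  have hfluxη := hasDerivWithinAt_morawetzFlux (hη.hasDerivWithinAt_x t ht x hx)
    (hη.hasDerivWithinAt_xx t ht x hx) (hη.hasDerivWithinAt_xxx t ht x hx)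
  have hfluxv := hasDerivWithinAt_morawetzFlux (hv.hasDerivWithinAt_x t ht x hx)
    (hv.hasDerivWithinAt_xx t ht x hx) (hv.hasDerivWithinAt_xxx t ht x hx)
  refine (hfluxη.add hfluxv).congr_deriv ?_
  linear_combination x * v t x * heqη + x * η t x * heqv

theorem morawetz_balance_law (L T : ℝ)
    (hη : HasPartialDerivsOn η ηt ηx ηxx ηxxx [[0, T]] [[0, L]])
    (hv : HasPartialDerivsOn v vt vx vxx vxxx [[0, T]] [[0, L]])
    (heqη : ∀ t ∈ [[0, T]], ∀ x ∈ [[0, L]], ηt t x + vx t x + vxxx t x = 0)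
    (heqv : ∀ t ∈ [[0, T]], ∀ x ∈ [[0, L]], vt t x + ηx t x + ηxxx t x = 0) :
    (∫ x in 0..L, (x * η T x * v T x - x * η 0 x * v 0 x))
      + (∫ t in 0..T,
          (morawetzFlux (η t) (ηx t) (ηxx t) L + morawetzFlux (v t) (vx t) (vxx t) L
            - (morawetzFlux (η t) (ηx t) (ηxx t) 0 + morawetzFlux (v t) (vx t) (vxx t) 0)))
      = 1 / 2 * (∫ t in 0..T, ∫ x in 0..L, (η t x ^ 2 + v t x ^ 2))
        - 3 / 2 * ∫ t in 0..T, ∫ x in 0..L, (ηx t x ^ 2 + vx t x ^ 2) := by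
  have hdensity : ∀ t ∈ [[0, T]], ∀ x ∈ [[0, L]], HasDerivWithinAt (fun s => x * η s x * v s x)
      (x * (ηt t x * v t x + η t x * vt t x)) [[0, T]] t := fun t ht x hx =>
    (((hη.hasDerivWithinAt_t t ht x hx).const_mul x).mul
      (hv.hasDerivWithinAt_t t ht x hx)).congr_deriv (by ring)
  have hcont_density : ContinuousOn (uncurry fun t x => x * (ηt t x * v t x + η t x * vt t x))
      ([[0, T]] ×ˢ [[0, L]]) :=
    continuousOn_snd.mul ((hη.continuousOn_t.mul hv.continuousOn).add
      (hη.continuousOn.mul hv.continuousOn_t))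
  have hcont_sq : ContinuousOn (uncurry fun t x => 1 / 2 * (η t x ^ 2 + v t x ^ 2))
      ([[0, T]] ×ˢ [[0, L]]) :=
    continuousOn_const.mul ((hη.continuousOn.pow 2).add (hv.continuousOn.pow 2))
  have hcont_grad : ContinuousOn (uncurry fun t x => 3 / 2 * (ηx t x ^ 2 + vx t x ^ 2))
      ([[0, T]] ×ˢ [[0, L]]) :=
    continuousOn_const.mul ((hη.continuousOn_x.pow 2).add (hv.continuousOn_x.pow 2))
  rw [integral_balance_law (P := fun t x => x * η t x * v t x) hdensity
      (fun t ht x hx => hasDerivWithinAt_morawetzFlux_add ht hx hη hv (heqη t ht x hx)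
        (heqv t ht x hx)) hcont_density (hcont_sq.sub hcont_grad),
    intervalIntegral_intervalIntegral_sub hcont_sq hcont_grad]
  simp only [intervalIntegral.integral_const_mul]

theorem statement_13_general (L T : ℝ)
    (hη : HasPartialDerivsOn η ηt ηx ηxx ηxxx [[0, T]] [[0, L]])
    (hv : HasPartialDerivsOn v vt vx vxx vxxx [[0, T]] [[0, L]])
    (heqη : ∀ t ∈ [[0, T]], ∀ x ∈ [[0, L]], ηt t x + vx t x + vxxx t x = 0)
    (heqv : ∀ t ∈ [[0, T]], ∀ x ∈ [[0, L]], vt t x + ηx t x + ηxxx t x = 0)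
    (hbdη : ∀ t ∈ [[0, T]], η t 0 = 0 ∧ η t L = 0)
    (hbdv : ∀ t ∈ [[0, T]], v t 0 = 0 ∧ v t L = 0) :
    3 / 2 * (∫ t in 0..T, ∫ x in 0..L, (ηx t x ^ 2 + vx t x ^ 2))
      - 1 / 2 * (∫ t in 0..T, ∫ x in 0..L, (η t x ^ 2 + v t x ^ 2))
      + (∫ x in 0..L, x * η T x * v T x)
      - (∫ x in 0..L, x * η 0 x * v 0 x)
      - L / 2 * (∫ t in 0..T, (ηx t L ^ 2 + vx t L ^ 2)) = 0 := by
  have hdensity : ∀ t ∈ [[0, T]], IntervalIntegrable (fun x => x * η t x * v t x) volume 0 L :=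
    fun t ht => ((continuousOn_id.mul (hη.continuousOn.uncurry_left t ht)).mul
      (hv.continuousOn.uncurry_left t ht)).intervalIntegrable
  have hflux : ∫ t in 0..T,
      (morawetzFlux (η t) (ηx t) (ηxx t) L + morawetzFlux (v t) (vx t) (vxx t) L
        - (morawetzFlux (η t) (ηx t) (ηxx t) 0 + morawetzFlux (v t) (vx t) (vxx t) 0))
      = -(L / 2) * ∫ t in 0..T, (ηx t L ^ 2 + vx t L ^ 2) := by
    rw [← intervalIntegral.integral_const_mul]
    refine intervalIntegral.integral_congr fun t ht => ?_
    simp only [morawetzFlux_of_eq_zero _ _ (hbdη t ht).1, morawetzFlux_of_eq_zero _ _ (hbdη t ht).2,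
      morawetzFlux_of_eq_zero _ _ (hbdv t ht).1, morawetzFlux_of_eq_zero _ _ (hbdv t ht).2]
    ring
  have hbalance := morawetz_balance_law L T hη hv heqη heqv
  rw [hflux, intervalIntegral.integral_sub (hdensity T right_mem_uIcc)
    (hdensity 0 left_mem_uIcc)] at hbalance
  linear_combination hbalance

end Morawetz

theorem contDiff_px {f : ℝ → ℝ → ℝ} {t : ℝ} {n : WithTop ℕ∞} (hf : ContDiff ℝ (n + 1) (f t)) :
    ContDiff ℝ n (px f t) :=
  hf.deriv'

theorem hasPartialDerivsOn_pt_px {f : ℝ → ℝ → ℝ} {I J : Set ℝ}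
    (ht : ∀ x, Differentiable ℝ fun t => f t x) (hx : ∀ t, ContDiff ℝ 3 (f t))
    (hcont : ContinuousOn (uncurry f) (I ×ˢ J)) (hcont_t : ContinuousOn (uncurry (pt f)) (I ×ˢ J))
    (hcont_x : ContinuousOn (uncurry (px f)) (I ×ˢ J)) :
    HasPartialDerivsOn f (pt f) (px f) (px (px f)) (px (px (px f))) I J := by
  have hpx : ∀ t, ContDiff ℝ 2 (px f t) := fun t => contDiff_px (hx t)
  have hpxx : ∀ t, ContDiff ℝ 1 (px (px f) t) := fun t => contDiff_px (hpx t)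
  exact
    { hasDerivWithinAt_t := fun t _ x _ => (ht x t).hasDerivAt.hasDerivWithinAt
      hasDerivWithinAt_x := fun t _ x _ =>
        ((hx t).differentiable three_ne_zero x).hasDerivAt.hasDerivWithinAt
      hasDerivWithinAt_xx := fun t _ x _ =>
        ((hpx t).differentiable two_ne_zero x).hasDerivAt.hasDerivWithinAt
      hasDerivWithinAt_xxx := fun t _ x _ =>
        ((hpxx t).differentiable one_ne_zero x).hasDerivAt.hasDerivWithinAt
      continuousOn := hcont
      continuousOn_t := hcont_t
      continuousOn_x := hcont_x }

/-- The Morawetz-multiplier identity for classical solutions of the homogeneous linearized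
KdV–KdV system. -/
theorem statement_13 (L T : ℝ) (hL : 0 < L) (hT : 0 < T)
    (η v : ℝ → ℝ → ℝ) (hsol : IsClassicalSolution L T η v) :
    (3/2) * (∫ t in (0:ℝ)..T, ∫ x in (0:ℝ)..L, ((px η t x)^2 + (px v t x)^2))
      - (1/2) * (∫ t in (0:ℝ)..T, ∫ x in (0:ℝ)..L, ((η t x)^2 + (v t x)^2))
      + (∫ x in (0:ℝ)..L, x * η T x * v T x)
      - (∫ x in (0:ℝ)..L, x * η 0 x * v 0 x)
      - (L/2) * (∫ t in (0:ℝ)..T, (px η t L)^2) = 0 := by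
  rw [IsClassicalSolution, ← uIcc_of_le hL.le, ← uIcc_of_le hT.le] at hsol
  obtain ⟨dη, dv, cη, cv, hη, hv, hηt, hvt, hηx, hvx, -, -, -, -, heqη, heqv, hbdη, hbdv⟩ := hsol
  have htrace : ∫ t in (0:ℝ)..T, (px η t L) ^ 2 =
      ∫ t in (0:ℝ)..T, ((px η t L) ^ 2 + (px v t L) ^ 2) :=
    intervalIntegral.integral_congr fun t ht => by simp [(hbdv t ht).2.2]
  rw [htrace]
  exact statement_13_general L T (hasPartialDerivsOn_pt_px dη cη hη hηt hηx)
    (hasPartialDerivsOn_pt_px dv cv hv hvt hvx) heqη heqv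
    (fun t ht => ⟨(hbdη t ht).1, (hbdη t ht).2.1⟩) (fun t ht => ⟨(hbdv t ht).1, (hbdv t ht).2.1⟩)
end

section
/- Let L > 0 with L ∉ 𝒩. Then for every continuous function z : [0,L] → ℂ there exists a three times continuously differentiable function y : [0,L] → ℂ such that y(0) = y(L) = y′(L) = 0 and −y‴(L − x) − y′(L − x) = z(x) for all x ∈ [0,L]. -/
open Set

/-! After the reflection `s = L - x` the equation reads `y‴ + y′ = f` with `f s = -z (L - s)`.
Duhamel's formula gives the solution with `y L = y′ L = 0` and `y″ L = a` as
`y s = ∫ t in L..s, (1 - cos (s - t)) • f t + (1 - cos (s - L)) • a`,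
so `y 0 = 0` can be solved for `a` as soon as `cos L ≠ 1`. The excluded lengths, the multiples of
`2π`, are the elements of `𝒩` with `k = l`. -/

section CriticalLengths

open Real

theorem natCast_mul_two_pi_mem_criticalN {n : ℕ} (hn : 0 < n) : n * (2 * π) ∈ criticalN := by
  refine ⟨n, n, hn, hn, ?_⟩
  have hsum : (n : ℝ) ^ 2 + n * n + (n : ℝ) ^ 2 = 3 * (n : ℝ) ^ 2 := by ring
  rw [hsum, sqrt_mul zero_le_three, sqrt_sq n.cast_nonneg]
  field_simp

theorem cos_ne_one_of_notMem_criticalN {L : ℝ} (hL : 0 < L) (hLN : L ∉ criticalN) :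
    cos L ≠ 1 := by
  intro hcos
  obtain ⟨n, rfl⟩ := (cos_eq_one_iff L).1 hcos
  have hn : 0 < n := by exact_mod_cast pos_of_mul_pos_left hL two_pi_pos.le
  lift n to ℕ using hn.le
  exact hLN (natCast_mul_two_pi_mem_criticalN (by exact_mod_cast hn))

end CriticalLengths

section Regularity

variable {𝕜 F : Type*} [NontriviallyNormedField 𝕜] [NormedAddCommGroup F] [NormedSpace 𝕜 F]

theorem contDiff_succ_of_hasDerivAt {n : ℕ} {g g' : 𝕜 → F} (hg : ∀ s, HasDerivAt g (g' s) s)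
    (hg' : ContDiff 𝕜 n g') : ContDiff 𝕜 (n + 1) g := by
  refine contDiff_succ_iff_deriv.2 ⟨fun s => (hg s).differentiableAt, by simp, ?_⟩
  rwa [deriv_eq hg]

end Regularity

section Duhamel

open Real

variable {E : Type*} [NormedAddCommGroup E] [NormedSpace ℝ E]

/-- The Duhamel integral of `f` against the sine kernel: the solution of `v″ + v = f` with
`v c = v′ c = 0`. -/
noncomputable def sinDuhamel (f : ℝ → E) (c s : ℝ) : E :=
  ∫ t in c..s, sin (s - t) • f t

/-- The Duhamel integral of `f` against the cosine kernel: the derivative of `sinDuhamel f c`. -/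
noncomputable def cosDuhamel (f : ℝ → E) (c s : ℝ) : E :=
  ∫ t in c..s, cos (s - t) • f t

/-- The solution of `y‴ + y′ = f` with `y c = y′ c = 0` and `y″ c = a`. The integral of
`f` minus `cosDuhamel f c` is its Duhamel integral against the kernel `1 - cos`. -/
noncomputable def duhamelSolution (f : ℝ → E) (c : ℝ) (a : E) (s : ℝ) : E :=
  (∫ t in c..s, f t) - cosDuhamel f c s + (1 - cos (s - c)) • a

variable {f : ℝ → E}

@[simp]
theorem sinDuhamel_self (f : ℝ → E) (c : ℝ) : sinDuhamel f c c = 0 :=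
  intervalIntegral.integral_same

@[simp]
theorem cosDuhamel_self (f : ℝ → E) (c : ℝ) : cosDuhamel f c c = 0 :=
  intervalIntegral.integral_same

theorem sinDuhamel_eq (hf : Continuous f) (c s : ℝ) :
    sinDuhamel f c s = sin s • (∫ t in c..s, cos t • f t) - cos s • ∫ t in c..s, sin t • f t := by
  simp only [sinDuhamel, sin_sub, sub_smul, mul_smul]
  rw [intervalIntegral.integral_sub, intervalIntegral.integral_smul,
    intervalIntegral.integral_smul]
  all_goals exact Continuous.intervalIntegrable (by fun_prop) _ _

theorem cosDuhamel_eq (hf : Continuous f) (c s : ℝ) :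
    cosDuhamel f c s = cos s • (∫ t in c..s, cos t • f t) + sin s • ∫ t in c..s, sin t • f t := by
  simp only [cosDuhamel, cos_sub, add_smul, mul_smul]
  rw [intervalIntegral.integral_add, intervalIntegral.integral_smul,
    intervalIntegral.integral_smul]
  all_goals exact Continuous.intervalIntegrable (by fun_prop) _ _

@[simp]
theorem duhamelSolution_self (f : ℝ → E) (c : ℝ) (a : E) : duhamelSolution f c a c = 0 := by
  simp [duhamelSolution]

theorem exists_duhamelSolution_eq_zero (f : ℝ → E) {c s : ℝ} (hcos : cos (s - c) ≠ 1) :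
    ∃ a, duhamelSolution f c a s = 0 := by
  have hne : 1 - cos (s - c) ≠ 0 := sub_ne_zero.2 hcos.symm
  refine ⟨(1 - cos (s - c))⁻¹ • (cosDuhamel f c s - ∫ t in c..s, f t), ?_⟩
  rw [duhamelSolution, smul_inv_smul₀ hne]
  abel

variable [CompleteSpace E]

theorem hasDerivAt_sinDuhamel (hf : Continuous f) (c s : ℝ) :
    HasDerivAt (sinDuhamel f c) (cosDuhamel f c s) s := by
  have hcos := ((by fun_prop : Continuous fun t => cos t • f t).integral_hasStrictDerivAt
    c s).hasDerivAt
  have hsin := ((by fun_prop : Continuous fun t => sin t • f t).integral_hasStrictDerivAt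
    c s).hasDerivAt
  rw [funext (sinDuhamel_eq hf c), cosDuhamel_eq hf]
  refine (((hasDerivAt_sin s).smul hcos).sub ((hasDerivAt_cos s).smul hsin)).congr_deriv ?_
  module

theorem hasDerivAt_cosDuhamel (hf : Continuous f) (c s : ℝ) :
    HasDerivAt (cosDuhamel f c) (f s - sinDuhamel f c s) s := by
  have hcos := ((by fun_prop : Continuous fun t => cos t • f t).integral_hasStrictDerivAt
    c s).hasDerivAt
  have hsin := ((by fun_prop : Continuous fun t => sin t • f t).integral_hasStrictDerivAt
    c s).hasDerivAt
  rw [funext (cosDuhamel_eq hf c), sinDuhamel_eq hf]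
  refine (((hasDerivAt_cos s).smul hcos).add ((hasDerivAt_sin s).smul hsin)).congr_deriv ?_
  linear_combination (norm := module) (cos_sq_add_sin_sq s) • f s

theorem hasDerivAt_duhamelSolution (hf : Continuous f) (c : ℝ) (a : E) (s : ℝ) :
    HasDerivAt (duhamelSolution f c a) (sinDuhamel f c s + sin (s - c) • a) s := by
  have hint := (hf.integral_hasStrictDerivAt c s).hasDerivAt
  have hcos := ((hasDerivAt_cos (s - c)).comp_sub_const s c).const_sub 1
  refine ((hint.sub (hasDerivAt_cosDuhamel hf c s)).add (hcos.smul_const a)).congr_deriv ?_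
  module

theorem deriv_duhamelSolution (hf : Continuous f) (c : ℝ) (a : E) :
    deriv (duhamelSolution f c a) = fun s => sinDuhamel f c s + sin (s - c) • a :=
  deriv_eq (hasDerivAt_duhamelSolution hf c a)

theorem deriv_deriv_duhamelSolution (hf : Continuous f) (c : ℝ) (a : E) :
    deriv (deriv (duhamelSolution f c a)) = fun s => cosDuhamel f c s + cos (s - c) • a := by
  rw [deriv_duhamelSolution hf]
  exact deriv_eq fun s => (hasDerivAt_sinDuhamel hf c s).add
    (((hasDerivAt_sin (s - c)).comp_sub_const s c).smul_const a)

theorem deriv_deriv_deriv_duhamelSolution_add_deriv (hf : Continuous f) (c : ℝ) (a : E) (s : ℝ) :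
    deriv (deriv (deriv (duhamelSolution f c a))) s + deriv (duhamelSolution f c a) s = f s := by
  have hderiv := (hasDerivAt_cosDuhamel hf c s).fun_add
    (((hasDerivAt_cos (s - c)).comp_sub_const s c).smul_const a)
  rw [deriv_deriv_duhamelSolution hf, deriv_duhamelSolution hf, hderiv.deriv]
  module

theorem contDiff_cosDuhamel (hf : Continuous f) (c : ℝ) : ContDiff ℝ 1 (cosDuhamel f c) := by
  have hsin : Continuous (sinDuhamel f c) :=
    continuous_iff_continuousAt.2 fun s => (hasDerivAt_sinDuhamel hf c s).continuousAt
  exact contDiff_succ_of_hasDerivAt (n := 0) (hasDerivAt_cosDuhamel hf c)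
    (contDiff_zero.2 (hf.sub hsin))

theorem contDiff_sinDuhamel (hf : Continuous f) (c : ℝ) : ContDiff ℝ 2 (sinDuhamel f c) :=
  contDiff_succ_of_hasDerivAt (n := 1) (hasDerivAt_sinDuhamel hf c) (contDiff_cosDuhamel hf c)

theorem contDiff_duhamelSolution (hf : Continuous f) (c : ℝ) (a : E) :
    ContDiff ℝ 3 (duhamelSolution f c a) := by
  have hsin := contDiff_sinDuhamel hf c
  exact contDiff_succ_of_hasDerivAt (n := 2) (hasDerivAt_duhamelSolution hf c a)
    (hsin.add (by fun_prop))

theorem exists_contDiff_deriv_deriv_deriv_add_deriv_eq (hf : Continuous f) {b c : ℝ}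
    (hcos : cos (b - c) ≠ 1) :
    ∃ y : ℝ → E, ContDiff ℝ 3 y ∧ y b = 0 ∧ y c = 0 ∧ deriv y c = 0 ∧
      ∀ s, deriv (deriv (deriv y)) s + deriv y s = f s := by
  obtain ⟨a, ha⟩ := exists_duhamelSolution_eq_zero f hcos
  exact ⟨duhamelSolution f c a, contDiff_duhamelSolution hf c a, ha, duhamelSolution_self f c a,
    by simp [deriv_duhamelSolution hf], deriv_deriv_deriv_duhamelSolution_add_deriv hf c a⟩

theorem statement_19_general {L : ℝ} (hcos : cos L ≠ 1) {z : ℝ → E}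
    (hz : ContinuousOn z (uIcc 0 L)) :
    ∃ y : ℝ → E, ContDiff ℝ 3 y ∧ y 0 = 0 ∧ y L = 0 ∧ deriv y L = 0 ∧
      ∀ x ∈ uIcc 0 L, -deriv (deriv (deriv y)) (L - x) - deriv y (L - x) = z x := by
  let zExt : ℝ → E := IccExtend inf_le_sup ((uIcc 0 L).domRestrict z)
  have hzExt : Continuous zExt := hz.domRestrict.Icc_extend'
  obtain ⟨y, hy, hy0, hyL, hy'L, hode⟩ := exists_contDiff_deriv_deriv_deriv_add_deriv_eq
    (f := fun s => -zExt (L - s)) (by fun_prop) (b := 0) (c := L) (by simpa using hcos)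
  refine ⟨y, hy, hy0, hyL, hy'L, fun x hx => ?_⟩
  calc -deriv (deriv (deriv y)) (L - x) - deriv y (L - x)
      = zExt x := by rw [← neg_add', hode, neg_neg, sub_sub_cancel]
    _ = z x := IccExtend_of_mem _ _ hx

end Duhamel

/-- If `L ∉ 𝒩`, then for every continuous `z : [0,L] → ℂ` there is a `C³` function `y` with
`y(0) = y(L) = y′(L) = 0` and `−y‴(L−x) − y′(L−x) = z(x)` on `[0,L]`. -/
theorem statement_19 (L : ℝ) (hL : 0 < L) (hLN : L ∉ criticalN)
    (z : ℝ → ℂ) (hz : ContinuousOn z (Icc 0 L)) :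
    ∃ y : ℝ → ℂ, ContDiff ℝ 3 y ∧ y 0 = 0 ∧ y L = 0 ∧ deriv y L = 0 ∧
      ∀ x ∈ Icc (0 : ℝ) L, -deriv (deriv (deriv y)) (L - x) - deriv y (L - x) = z x := by
  rw [← uIcc_of_le hL.le] at hz ⊢
  exact statement_19_general (cos_ne_one_of_notMem_criticalN hL hLN) hz
end
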